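/- Fix ε>0 and u∈𝒰. Then I_ε(u)<+∞ if and only if there exists Ψ∈𝓓¹_{σ(u)} such that u is a weak solution to u_t+f(u)_x=(ε/2)(D(u)u_x)_x−(σ(u)Ψ_x)_x, i.e. for every φ∈C_c^∞([0,T]×ℝ): ⟨u(T),φ(T)⟩−⟨u(0),φ(0)⟩−[⟨⟨u,φ_t⟩⟩+⟨⟨f(u)−(ε/2)D(u)u_x+σ(u)Ψ_x, φ_x⟩⟩]=0. In that case Ψ is unique and I_ε(u) = (1/2)‖u_t+f(u)_x−(ε/2)(D(u)u_x)_x‖²_{𝓓⁻¹_{σ(u)}} = (1/2)‖Ψ‖²_{𝓓¹_{σ(u)}}. -/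

import Mathlib

/-!
Write `ℓ(φ)` for the linear functional `ellC`, which includes the boundary terms at `t = 0, T`,
and `a = σ(u) ≥ 0`. The theorem is the Riesz representation of `ℓ` on the closure of
`{φ_x : φ a test function}` in the Hilbert space `L²(a dt dx)` (`wmeas`), which is what `InD1`
describes (`inD1_iff`); `rieszEq` says exactly that `ℓ(φ) = ⟨P, φ_x⟩` there (`rieszEq_iff`).

The cost `I_ε(u)` is a supremum over test functions vanishing near `t = 0, T`. Multiplying a
general test function by smooth time cutoffs `cut T n` and letting `n → ∞`, the derivatives of the
cutoffs act as approximate Dirac masses at the two endpoints. The continuity of `u` for the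
metric `d_U` makes `t ↦ ∫ u(t,x) φ(t,x) dx` continuous on `[0,T]` (`cU.continuousOn_slice`), so the
boundary terms of `ℓ` appear in the limit (`tendsto_pair_cutD`) and the supremum equals
`sup_φ [ℓ(φ) - ½‖φ_x‖²]` over all test functions (`Ieps_eq_iSup`). Almost everywhere uniqueness of
the weak derivative (`weakDx_unique`) makes this independent of the representative of `u_x`.

If the supremum is a finite `M`, replacing `φ` by `sφ` gives `ℓ(φ)² ≤ 2M‖φ_x‖²`, so `ℓ` is
represented by some `P` in the closure (`exists_riesz`). Conversely, if `P` represents `ℓ`, then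
`⟨P, φ_x⟩ - ½‖φ_x‖² = ½‖P‖² - ½‖P - φ_x‖²` has supremum `½‖P‖²` by density (`iSup_riesz`), and
`P` is determined by its inner products with a dense set (`unique_riesz`).
-/

open MeasureTheory Set Filter Topology
open scoped ENNReal Classical

noncomputable section

namespace GammaSCL

/-! ### Spatial test functions and the metric on `U` -/

/-- Smooth compactly supported test functions on `ℝ`, supported in `(-N, N)`. -/
structure STest (N : ℝ) where
  toFun : ℝ → ℝ
  smooth : ContDiff ℝ (⊤ : ℕ∞) toFun
  cpt : HasCompactSupport toFun
  supp : Function.support toFun ⊆ Ioo (-N) N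

/-- The negative Sobolev seminorm `‖w‖_{-1,N}`. -/
def negNorm (N : ℝ) (w : ℝ → ℝ) : ℝ :=
  sSup { r : ℝ | ∃ φ : STest N, (∫ x, deriv φ.toFun x ^ 2) = 1 ∧ r = ∫ x, w x * φ.toFun x }

/-- The metric `d_U` on the space `U` of measurable `[0,1]`-valued functions. -/
def dU (u v : ℝ → ℝ) : ℝ :=
  ∑' n : ℕ, (2 : ℝ)⁻¹ ^ (n + 1) *
    (negNorm ((n : ℝ) + 1) (fun x => u x - v x) /
      (1 + negNorm ((n : ℝ) + 1) (fun x => u x - v x)))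

/-- The space `𝒰 = C([0,T]; U)`. -/
structure cU (T : ℝ) where
  toFun : ℝ × ℝ → ℝ
  meas : Measurable toFun
  mem01 : ∀ p, toFun p ∈ Icc (0:ℝ) 1
  cont : ∀ t₀ ∈ Icc (0:ℝ) T, ∀ δ > 0, ∃ ζ > 0, ∀ t ∈ Icc (0:ℝ) T,
    |t - t₀| < ζ → dU (fun x => toFun (t, x)) (fun x => toFun (t₀, x)) < δ

/-- The uniform metric `d_𝒰` on `𝒰`. -/
def dcU (T : ℝ) (u v : cU T) : ℝ :=
  sSup { r : ℝ | ∃ t ∈ Icc (0:ℝ) T,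
    r = dU (fun x => u.toFun (t, x)) (fun x => v.toFun (t, x)) }

/-- The metric `d_𝒳` on `𝒳`. -/
def dX (T : ℝ) (u v : cU T) : ℝ :=
  (∑' n : ℕ, (2 : ℝ)⁻¹ ^ (n + 1) *
    ∫ p in Icc (0:ℝ) T ×ˢ Icc (-((n : ℝ) + 1)) ((n : ℝ) + 1), |u.toFun p - v.toFun p|) +
  dcU T u v

/-! ### Space-time test functions -/

/-- Smooth test functions compactly supported in `(0,T) × ℝ`. -/
structure TTest (T : ℝ) where
  toFun : ℝ × ℝ → ℝ
  smooth : ContDiff ℝ (⊤ : ℕ∞) toFun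
  cpt : HasCompactSupport toFun
  supp : Function.support toFun ⊆ Ioo (0 : ℝ) T ×ˢ (univ : Set ℝ)

/-- Smooth test functions compactly supported in `[0,T] × ℝ` (no vanishing at `t = 0, T`). -/
structure TTestC where
  toFun : ℝ × ℝ → ℝ
  smooth : ContDiff ℝ (⊤ : ℕ∞) toFun
  cpt : HasCompactSupport toFun

/-- Partial derivative in `t`. -/
def ptF (ψ : ℝ × ℝ → ℝ) : ℝ × ℝ → ℝ := fun p => fderiv ℝ ψ p (1, 0)
/-- Partial derivative in `x`. -/
def pxF (ψ : ℝ × ℝ → ℝ) : ℝ × ℝ → ℝ := fun p => fderiv ℝ ψ p (0, 1)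

/-- The `L²([0,T] × ℝ)` inner product `⟨⟨g, h⟩⟩`. -/
def pair (T : ℝ) (g h : ℝ × ℝ → ℝ) : ℝ :=
  ∫ p in Icc (0:ℝ) T ×ˢ (univ : Set ℝ), g p * h p

/-! ### Weak derivatives -/

/-- Locally square integrable on `[0,T] × ℝ`. -/
def L2loc (T : ℝ) (w : ℝ × ℝ → ℝ) : Prop :=
  Measurable w ∧ ∀ R > 0, IntegrableOn (fun p => w p ^ 2) (Icc (0:ℝ) T ×ˢ Icc (-R) R)

/-- `w` is the weak `x`-derivative of `u`. -/
def HasWeakDx (T : ℝ) (u w : ℝ × ℝ → ℝ) : Prop :=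
  ∀ φ : TTest T, pair T u (pxF φ.toFun) = - pair T w φ.toFun

/-- `u` admits a locally square integrable weak `x`-derivative. -/
def hasDx (T : ℝ) (u : ℝ × ℝ → ℝ) : Prop := ∃ w, L2loc T w ∧ HasWeakDx T u w

/-- A choice of weak `x`-derivative. -/
def wDx (T : ℝ) (u : ℝ × ℝ → ℝ) : ℝ × ℝ → ℝ :=
  if h : hasDx T u then h.choose else 0

/-! ### The parabolic cost functional -/

/-- The expression inside the supremum defining `I_ε`. -/
def IexprW (f D σ : ℝ → ℝ) (T ε : ℝ) (u w : ℝ × ℝ → ℝ) (φ : TTest T) : ℝ :=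
  - pair T u (ptF φ.toFun) - pair T (fun p => f (u p)) (pxF φ.toFun)
    + ε / 2 * pair T (fun p => D (u p) * w p) (pxF φ.toFun)
    - 1 / 2 * pair T (fun p => σ (u p) * pxF φ.toFun p) (pxF φ.toFun)

/-- The cost functional `I_ε : 𝒰 → [0,+∞]`. -/
def Ieps (f D σ : ℝ → ℝ) (T ε : ℝ) (u : cU T) : ℝ≥0∞ :=
  if hasDx T u.toFun then
    ⨆ φ : TTest T, ENNReal.ofReal (IexprW f D σ T ε u.toFun (wDx T u.toFun) φ)
  else ⊤

/-- The rescaled cost functional `H_ε := ε⁻¹ I_ε`. -/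
def Heps (f D σ : ℝ → ℝ) (T ε : ℝ) (u : cU T) : ℝ≥0∞ :=
  ENNReal.ofReal ε⁻¹ * Ieps f D σ T ε u

/-! ### Young measures -/

/-- The space `𝓜` of Young measures. -/
structure YM (T : ℝ) where
  m : ℝ × ℝ → Measure ℝ
  prob : ∀ p, IsProbabilityMeasure (m p)
  supp01 : ∀ p, m p (Icc (0:ℝ) 1)ᶜ = 0
  meas : ∀ F : ℝ → ℝ, Continuous F → Measurable fun p => ∫ l, F l ∂ m p
  bar_mem : ∀ p, (∫ l, l ∂ m p) ∈ Icc (0:ℝ) 1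
  bar_cont : ∀ t₀ ∈ Icc (0:ℝ) T, ∀ δ > 0, ∃ ζ > 0, ∀ t ∈ Icc (0:ℝ) T,
    |t - t₀| < ζ →
      dU (fun x => ∫ l, l ∂ m (t, x)) (fun x => ∫ l, l ∂ m (t₀, x)) < δ

/-- The moment `μ(F)`. -/
def YM.mom {T : ℝ} (μ : YM T) (F : ℝ → ℝ) : ℝ × ℝ → ℝ := fun p => ∫ l, F l ∂ μ.m p

/-- The barycenter `μ(ι)` of a Young measure, as an element of `𝒰`. -/
def YM.bar {T : ℝ} (μ : YM T) : cU T :=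
  ⟨fun p => ∫ l, l ∂ μ.m p, μ.meas (fun l => l) continuous_id', μ.bar_mem, μ.bar_cont⟩

/-- The metric `d_𝓜 = d_w + d_𝒰(μ(ι), ν(ι))`. -/
def dM (T : ℝ) (dw : YM T → YM T → ℝ) (μ ν : YM T) : ℝ :=
  dw μ ν + dcU T μ.bar ν.bar

/-- `dw` is a distance generating the weak* topology on Young measures. -/
def GeneratesWeakStar (T : ℝ) (dw : YM T → YM T → ℝ) : Prop :=
  (∀ μ ν, dw μ ν = dw ν μ) ∧ (∀ μ ν, 0 ≤ dw μ ν) ∧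
  ∀ (μ : ℕ → YM T) (ν : YM T),
    Tendsto (fun n => dw (μ n) ν) atTop (𝓝 0) ↔
      ∀ g : ℝ × (ℝ × ℝ) → ℝ, Continuous g → HasCompactSupport g →
        Tendsto
          (fun n => ∫ p in Icc (0:ℝ) T ×ˢ (univ : Set ℝ), ∫ l, g (l, p) ∂ (μ n).m p)
          atTop
          (𝓝 (∫ p in Icc (0:ℝ) T ×ˢ (univ : Set ℝ), ∫ l, g (l, p) ∂ ν.m p))

/-- The lift `𝓘_ε` of `I_ε` to Young measures. -/
def calIeps (f D σ : ℝ → ℝ) (T ε : ℝ) (μ : YM T) : ℝ≥0∞ :=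
  if h : ∃ u : cU T, ∀ p, μ.m p = Measure.dirac (u.toFun p) then
    Ieps f D σ T ε h.choose
  else ⊤

/-- The limiting functional `𝓘` on Young measures. -/
def calI (f σ : ℝ → ℝ) (T : ℝ) (μ : YM T) : ℝ≥0∞ :=
  ⨆ φ : TTest T, ENNReal.ofReal
    (- pair T (μ.mom (fun l => l)) (ptF φ.toFun) - pair T (μ.mom f) (pxF φ.toFun)
      - 1 / 2 * pair T (fun p => μ.mom σ p * pxF φ.toFun p) (pxF φ.toFun))

/-! ### Γ-convergence via sequences -/

/-- Sequential compactness with respect to a distance function. -/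
def SeqCompactIn {α : Type*} (d : α → α → ℝ) (K : Set α) : Prop :=
  ∀ x : ℕ → α, (∀ n, x n ∈ K) → ∃ y ∈ K, ∃ s : ℕ → ℕ, StrictMono s ∧
    Tendsto (fun n => d (x (s n)) y) atTop (𝓝 0)

/-- Equicoercivity of a family of functionals. -/
def Equicoercive {α : Type*} (d : α → α → ℝ) (F : ℝ → α → ℝ≥0∞) : Prop :=
  ∀ M : ℝ, 0 < M → ∃ K : Set α, SeqCompactIn d K ∧
    ∀ ε ∈ Ioc (0:ℝ) 1, { x : α | F ε x ≤ ENNReal.ofReal M } ⊆ K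

/-- The Γ-liminf inequality `Γ-liminf F_ε ≥ G`. -/
def GammaLiminfGE {α : Type*} (d : α → α → ℝ) (F : ℝ → α → ℝ≥0∞) (G : α → ℝ≥0∞) : Prop :=
  ∀ (x : α) (e : ℕ → ℝ) (xs : ℕ → α), (∀ n, 0 < e n) → Tendsto e atTop (𝓝 0) →
    Tendsto (fun n => d (xs n) x) atTop (𝓝 0) →
    G x ≤ Filter.liminf (fun n => F (e n) (xs n)) atTop

/-- The Γ-limsup inequality `Γ-limsup F_ε ≤ G`. -/
def GammaLimsupLE {α : Type*} (d : α → α → ℝ) (F : ℝ → α → ℝ≥0∞) (G : α → ℝ≥0∞) : Prop :=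
  ∀ (x : α) (e : ℕ → ℝ), (∀ n, 0 < e n) → Tendsto e atTop (𝓝 0) →
    ∃ xs : ℕ → α, Tendsto (fun n => d (xs n) x) atTop (𝓝 0) ∧
      Filter.limsup (fun n => F (e n) (xs n)) atTop ≤ G x

/-- Γ-convergence of `F_ε` to `G`. -/
def GammaConvergesTo {α : Type*} (d : α → α → ℝ) (F : ℝ → α → ℝ≥0∞) (G : α → ℝ≥0∞) : Prop :=
  GammaLiminfGE d F G ∧ GammaLimsupLE d F G

/-! ### Entropies, entropy production, kinetic measures -/

/-- Weak solutions to `u_t + f(u)_x = 0`. -/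
def IsWeakSolution (f : ℝ → ℝ) (T : ℝ) (u : ℝ × ℝ → ℝ) : Prop :=
  ∀ φ : TTest T, pair T u (ptF φ.toFun) + pair T (fun p => f (u p)) (pxF φ.toFun) = 0

/-- Derivative within `[0,1]`. -/
def dIcc (g : ℝ → ℝ) : ℝ → ℝ := fun v => derivWithin g (Icc 0 1) v

/-- An entropy–entropy flux pair. -/
structure Entropy (f : ℝ → ℝ) where
  eta : ℝ → ℝ
  q : ℝ → ℝ
  smooth : ContDiffOn ℝ 2 eta (Icc 0 1)
  qcont : ContinuousOn q (Icc 0 1)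
  flux : ∀ a ∈ Icc (0:ℝ) 1, ∀ b ∈ Icc (0:ℝ) 1,
    q b - q a = ∫ v in a..b, dIcc eta v * deriv f v

/-- The `η`-entropy production `℘_{η,u}(φ)`. -/
def entProd (f : ℝ → ℝ) (T : ℝ) (E : Entropy f) (u : ℝ × ℝ → ℝ) (φ : TTest T) : ℝ :=
  - pair T (fun p => E.eta (u p)) (ptF φ.toFun) - pair T (fun p => E.q (u p)) (pxF φ.toFun)

/-- `‖℘_{η,u}‖_{TV,L}`. -/
def TVabs (f : ℝ → ℝ) (T : ℝ) (E : Entropy f) (L : ℝ) (u : ℝ × ℝ → ℝ) : ℝ≥0∞ :=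
  ⨆ φ : { φ : TTest T // Function.support φ.toFun ⊆ Ioo (0:ℝ) T ×ˢ Ioo (-L) L ∧
          ∀ p, |φ.toFun p| ≤ 1 },
    ENNReal.ofReal (entProd f T E u φ.1)

/-- `‖℘⁺_{η,u}‖_{TV,L}`. -/
def TVpos (f : ℝ → ℝ) (T : ℝ) (E : Entropy f) (L : ℝ) (u : ℝ × ℝ → ℝ) : ℝ≥0∞ :=
  ⨆ φ : { φ : TTest T // Function.support φ.toFun ⊆ Ioo (0:ℝ) T ×ˢ Ioo (-L) L ∧
          ∀ p, φ.toFun p ∈ Icc (0:ℝ) 1 },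
    ENNReal.ofReal (entProd f T E u φ.1)

/-- Entropy-measure solutions: every entropy production extends to a Radon measure. -/
def EMsol (f : ℝ → ℝ) (T : ℝ) (u : cU T) : Prop :=
  IsWeakSolution f T u.toFun ∧ ∀ E : Entropy f, ∀ L > 0, TVabs f T E L u.toFun ≠ ⊤

/-- `v`-derivative (within `[0,1]`) of a sampler. -/
def dv1 (θ : ℝ → ℝ × ℝ → ℝ) : ℝ → ℝ × ℝ → ℝ :=
  fun v p => derivWithin (fun w => θ w p) (Icc 0 1) v

/-- An entropy sampler together with a conjugated entropy flux sampler. -/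
structure Sampler (f : ℝ → ℝ) (T : ℝ) where
  θ : ℝ → ℝ × ℝ → ℝ
  Q : ℝ → ℝ × ℝ → ℝ
  cpt : HasCompactSupport (Function.uncurry θ)
  supp : Function.support (Function.uncurry θ) ⊆
    Icc (0:ℝ) 1 ×ˢ (Ioo (0:ℝ) T ×ˢ (univ : Set ℝ))
  smooth_p : ∀ v, ContDiff ℝ (⊤ : ℕ∞) (θ v)
  smooth_v : ∀ p, ContDiffOn ℝ 2 (fun v => θ v p) (Icc 0 1)
  cont0 : Continuous (Function.uncurry θ)
  cont1 : ContinuousOn (Function.uncurry (dv1 θ)) (Icc (0:ℝ) 1 ×ˢ (univ : Set (ℝ × ℝ)))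
  cont2 : ContinuousOn (Function.uncurry (dv1 (dv1 θ))) (Icc (0:ℝ) 1 ×ˢ (univ : Set (ℝ × ℝ)))
  Qsmooth : ∀ v, ContDiff ℝ 1 (Q v)
  Qflux : ∀ (p : ℝ × ℝ), ∀ a ∈ Icc (0:ℝ) 1, ∀ b ∈ Icc (0:ℝ) 1,
    Q b p - Q a p = ∫ v in a..b, dv1 θ v p * deriv f v

/-- The `ϑ`-sampled entropy production `P_{ϑ,u}`. -/
def Ptheta (f : ℝ → ℝ) (T : ℝ) (S : Sampler f T) (u : ℝ × ℝ → ℝ) : ℝ :=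
  - ∫ p in Icc (0:ℝ) T ×ˢ (univ : Set ℝ),
      (fderiv ℝ (S.θ (u p)) p (1, 0) + fderiv ℝ (S.Q (u p)) p (0, 1))

/-- `(ρp, ρn)` is a decomposition of the kinetic measure `ϱ_u` of a weak solution `u`. -/
def IsKineticMeasure (f : ℝ → ℝ) (T : ℝ) (u : ℝ × ℝ → ℝ)
    (ρp ρn : ℝ → Measure (ℝ × ℝ)) : Prop :=
  (∀ v, ρp v ((Ioo (0:ℝ) T ×ˢ (univ : Set ℝ))ᶜ) = 0 ∧
        ρn v ((Ioo (0:ℝ) T ×ˢ (univ : Set ℝ))ᶜ) = 0) ∧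
  (∀ L > 0, ∃ C : ℝ≥0∞, C ≠ ⊤ ∧ ∀ v ∈ Icc (0:ℝ) 1,
      ρp v (Icc (0:ℝ) T ×ˢ Icc (-L) L) + ρn v (Icc (0:ℝ) T ×ˢ Icc (-L) L) ≤ C) ∧
  (∀ g : ℝ × ℝ → ℝ, Continuous g → HasCompactSupport g →
      Measurable fun v => (∫ p, g p ∂ ρp v) - ∫ p, g p ∂ ρn v) ∧
  ∀ S : Sampler f T, Ptheta f T S u =
    ∫ v in Icc (0:ℝ) 1,
      ((∫ p, dv1 (dv1 S.θ) v p ∂ ρp v) - ∫ p, dv1 (dv1 S.θ) v p ∂ ρn v)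

/-- The Γ-entropy cost functional `H`. -/
def Hfun (f D σ : ℝ → ℝ) (T : ℝ) (u : cU T) : ℝ≥0∞ :=
  if IsWeakSolution f T u.toFun then
    ⨅ ρ : { ρ : (ℝ → Measure (ℝ × ℝ)) × (ℝ → Measure (ℝ × ℝ)) //
            IsKineticMeasure f T u.toFun ρ.1 ρ.2 },
      ∫⁻ v in Icc (0:ℝ) 1, ENNReal.ofReal (D v / σ v) * ρ.1.1 v univ
  else ⊤

/-- Entropic solutions. -/
def EntropicSol (f : ℝ → ℝ) (T : ℝ) (u : cU T) : Prop :=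
  IsWeakSolution f T u.toFun ∧
  ∀ E : Entropy f, (∀ v ∈ Icc (0:ℝ) 1, 0 ≤ dIcc (dIcc E.eta) v) →
    ∀ φ : TTest T, (∀ p, 0 ≤ φ.toFun p) → entProd f T E u.toFun φ ≤ 0

/-- There is no interval in which `f` is affine. -/
def NoAffinePiece (f : ℝ → ℝ) : Prop :=
  ∀ a b : ℝ, 0 ≤ a → a < b → b ≤ 1 →
    ¬ ∃ c d : ℝ, ∀ v ∈ Icc a b, f v = c * v + d

/-- Entropy-splittable solutions. -/
def Splittable (f : ℝ → ℝ) (T : ℝ) (u : cU T) : Prop :=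
  EMsol f T u ∧
  ∃ Ep En : Set (ℝ × ℝ), IsClosed Ep ∧ IsClosed En ∧
    Ep ⊆ Icc (0:ℝ) T ×ˢ (univ : Set ℝ) ∧ En ⊆ Icc (0:ℝ) T ×ˢ (univ : Set ℝ) ∧
    (∃ ρp ρn : ℝ → Measure (ℝ × ℝ), IsKineticMeasure f T u.toFun ρp ρn ∧
      ∀ᵐ v ∂(volume.restrict (Icc (0:ℝ) 1)), ρp v Epᶜ = 0 ∧ ρn v Enᶜ = 0) ∧
    ∀ L > 0, ∀ a b : ℝ, 0 ≤ a → a < b → b ≤ T →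
      ∃ a' b' : ℝ, a ≤ a' ∧ a' < b' ∧ b' ≤ b ∧
        ∀ t ∈ Ioo a' b', ∀ x ∈ Icc (-L) L, (t, x) ∉ Ep ∩ En

/-- Nice solutions with respect to `σ`: the set `𝒮_σ`. -/
def NiceSol (f D σ : ℝ → ℝ) (T : ℝ) (u : cU T) : Prop :=
  Splittable f T u ∧ Hfun f D σ T u ≠ ⊤ ∧
  ∀ L > 0, ∃ δ > 0,
    ∀ᵐ p ∂(volume.restrict (Icc (0:ℝ) T ×ˢ Icc (-L) L)), δ ≤ σ (u.toFun p)

/-- The relaxed functional `H̄`. -/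
def Hbar (f D σ : ℝ → ℝ) (T : ℝ) (u : cU T) : ℝ≥0∞ :=
  ⨅ s : { s : ℕ → cU T // (∀ n, NiceSol f D σ T (s n)) ∧
          Tendsto (fun n => dX T (s n) u) atTop (𝓝 0) },
    Filter.liminf (fun n => Hfun f D σ T (s.1 n)) atTop

/-- Continuity in time with values in `L¹_loc(ℝ)`. -/
def ContL1 (T : ℝ) (u : ℝ × ℝ → ℝ) : Prop :=
  ∀ t₀ ∈ Icc (0:ℝ) T, ∀ R > 0, ∀ δ > 0, ∃ ζ > 0, ∀ t ∈ Icc (0:ℝ) T,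
    |t - t₀| < ζ → (∫ x in Icc (-R) R, |u (t, x) - u (t₀, x)|) < δ

/-! ### The relaxation `R_{f,σ}` and the Γ-limit `I` on `𝒰` -/

/-- The function `R_{f,σ}(w,c)`. -/
def Rfs (f σ : ℝ → ℝ) (w c : ℝ) : ℝ≥0∞ :=
  ⨅ ν : { ν : Measure ℝ // IsProbabilityMeasure ν ∧ ν (Icc (0:ℝ) 1)ᶜ = 0 ∧ (∫ l, l ∂ν) = w },
    if (∫ l, σ l ∂ν.1) = 0 then (if (∫ l, f l ∂ν.1) = c then 0 else ⊤)
    else ENNReal.ofReal ((∫ l, f l ∂ν.1 - c) ^ 2 / ∫ l, σ l ∂ν.1)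

/-- The Γ-limit `I` of `I_ε` on `𝒰`. -/
def Ilim (f σ : ℝ → ℝ) (T : ℝ) (u : cU T) : ℝ≥0∞ :=
  ⨅ Φ : { Φ : ℝ × ℝ → ℝ // L2loc T Φ ∧
          ∀ φ : TTest T, - pair T Φ (pxF φ.toFun) = pair T u.toFun (ptF φ.toFun) },
    ∫⁻ p in Icc (0:ℝ) T ×ˢ (univ : Set ℝ), Rfs f σ (u.toFun p) (Φ.1 p)

/-! ### The classes `𝓜_g` and `𝓜₀` -/

/-- The class `𝓜_g`. -/
def Mg (f σ : ℝ → ℝ) (T : ℝ) (μ : YM T) : Prop :=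
  calI f σ T μ ≠ ⊤ ∧
  ∃ r > 0, ∃ L > 0, ∃ ν : Measure ℝ, IsProbabilityMeasure ν ∧ ν (Icc (0:ℝ) 1)ᶜ = 0 ∧
    (∀ p : ℝ × ℝ, p.1 ∈ Icc (0:ℝ) T → r ≤ μ.mom (fun l => l) p ∧ r ≤ μ.mom σ p) ∧
    ∀ p : ℝ × ℝ, p.1 ∈ Icc (0:ℝ) T → L < |p.2| → μ.m p = ν

/-- The class `𝓜₀` of Dirac masses of smooth functions in `𝓜_g`. -/
def M0 (f σ : ℝ → ℝ) (T : ℝ) (μ : YM T) : Prop :=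
  Mg f σ T μ ∧ ∃ u : ℝ × ℝ → ℝ, ContDiff ℝ 1 u ∧ (∀ p, u p ∈ Icc (0:ℝ) 1) ∧
    ∀ p, μ.m p = Measure.dirac (u p)

/-! ### The spaces `𝓓¹_a` and the Riesz representation of the cost -/

/-- `P` represents (the gradient of) an element of the Hilbert space `𝓓¹_a`. -/
def InD1 (T : ℝ) (a P : ℝ × ℝ → ℝ) : Prop :=
  Measurable P ∧ IntegrableOn (fun p => a p * P p ^ 2) (Icc (0:ℝ) T ×ˢ (univ : Set ℝ)) ∧
  ∀ δ > 0, ∃ φ : TTestC,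
    (∫ p in Icc (0:ℝ) T ×ˢ (univ : Set ℝ), a p * (P p - pxF φ.toFun p) ^ 2) < δ

/-- The extended linear functional `ℓ^u_ε(φ)` with boundary terms. -/
def ellC (f D : ℝ → ℝ) (T ε : ℝ) (u w : ℝ × ℝ → ℝ) (φ : TTestC) : ℝ :=
  (∫ x, u (T, x) * φ.toFun (T, x)) - (∫ x, u (0, x) * φ.toFun (0, x))
    - pair T u (ptF φ.toFun) - pair T (fun p => f (u p)) (pxF φ.toFun)
    + ε / 2 * pair T (fun p => D (u p) * w p) (pxF φ.toFun)

/-- `u` is a weak solution to `u_t + f(u)_x = (ε/2)(D(u)u_x)_x - (σ(u)Ψ_x)_x` with `Ψ_x = P`. -/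
def rieszEq (f D σ : ℝ → ℝ) (T ε : ℝ) (u w P : ℝ × ℝ → ℝ) : Prop :=
  ∀ φ : TTestC,
    (∫ x, u (T, x) * φ.toFun (T, x)) - (∫ x, u (0, x) * φ.toFun (0, x))
      - (pair T u (ptF φ.toFun)
        + pair T (fun p => f (u p) - ε / 2 * (D (u p) * w p) + σ (u p) * P p)
            (pxF φ.toFun)) = 0

/-- `μ(ι)_t + μ(f)_x = -(μ(σ) P)_x` weakly. -/
def calIEq (f σ : ℝ → ℝ) (T : ℝ) (μ : YM T) (P : ℝ × ℝ → ℝ) : Prop :=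
  ∀ φ : TTest T,
    - pair T (μ.mom (fun l => l)) (ptF φ.toFun) - pair T (μ.mom f) (pxF φ.toFun)
      = pair T (fun p => μ.mom σ p * P p) (pxF φ.toFun)

/-! ### The cost functional on `L¹_loc` -/

/-- Locally integrable on `[0,T] × ℝ`. -/
def L1loc (T : ℝ) (u : ℝ × ℝ → ℝ) : Prop :=
  Measurable u ∧ ∀ R > 0, IntegrableOn u (Icc (0:ℝ) T ×ˢ Icc (-R) R)

/-- The cost functional `Î_ε` on `L¹_loc([0,T] × ℝ)`. -/
def Ihat (f D σ : ℝ → ℝ) (T ε : ℝ) (u : ℝ × ℝ → ℝ) : ℝ≥0∞ :=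
  if L2loc T (fun p => f (u p)) ∧ hasDx T u then
    ⨆ φ : TTest T, ENNReal.ofReal (IexprW f D σ T ε u (wDx T u) φ)
  else ⊤

/-! ### Hamilton–Jacobi equations -/

/-- The space `𝓑` (representatives of equivalence classes modulo additive constants). -/
structure HJ (T : ℝ) where
  b : ℝ × ℝ → ℝ
  meas : Measurable b
  sq : ∀ t ∈ Icc (0:ℝ) T, ∀ R > 0, IntegrableOn (fun x => b (t, x) ^ 2) (Icc (-R) R)
  contL2 : ∀ t₀ ∈ Icc (0:ℝ) T, ∀ R > 0, ∀ δ > 0, ∃ ζ > 0, ∀ t ∈ Icc (0:ℝ) T,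
    |t - t₀| < ζ → (∫ x in Icc (-R) R, (b (t, x) - b (t₀, x)) ^ 2) < δ
  ux : cU T
  hux : ∀ φ : TTest T, pair T b (pxF φ.toFun) = - pair T ux.toFun φ.toFun

/-- The part of the distance on `𝓑` involving the infimum over additive constants. -/
def dConst (T : ℝ) (b1 b2 : HJ T) : ℝ :=
  sInf { r : ℝ | ∃ c : ℝ, r = sSup { s : ℝ | ∃ t ∈ Icc (0:ℝ) T,
    s = ∑' n : ℕ, (2 : ℝ)⁻¹ ^ (n + 1) *
      Real.sqrt (∫ x in Icc (-((n : ℝ) + 1)) ((n : ℝ) + 1),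
        (b1.b (t, x) - b2.b (t, x) + c) ^ 2) } }

/-- The metric `d_𝓑`. -/
def dB (T : ℝ) (b1 b2 : HJ T) : ℝ := dcU T b1.ux b2.ux + dConst T b1 b2

/-- The metric `d_𝒴`. -/
def dY (T : ℝ) (b1 b2 : HJ T) : ℝ := dX T b1.ux b2.ux + dConst T b1 b2

/-- The expression inside the supremum defining `J_ε`. -/
def JexprW (f D σ : ℝ → ℝ) (T ε : ℝ) (bb uxf w2 : ℝ × ℝ → ℝ) (φ : TTest T) : ℝ :=
  - pair T bb (ptF φ.toFun) + pair T (fun p => f (uxf p)) φ.toFun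
    - ε / 2 * pair T (fun p => D (uxf p) * w2 p) φ.toFun
    - 1 / 2 * pair T (fun p => σ (uxf p) * φ.toFun p) φ.toFun

/-- The cost functional `J_ε` on `𝓑`. -/
def Jeps (f D σ : ℝ → ℝ) (T ε : ℝ) (b : HJ T) : ℝ≥0∞ :=
  if hasDx T b.ux.toFun then
    ⨆ φ : TTest T, ENNReal.ofReal (JexprW f D σ T ε b.b b.ux.toFun (wDx T b.ux.toFun) φ)
  else ⊤

/-- The rescaled cost functional `K_ε := ε⁻¹ J_ε`. -/
def Keps (f D σ : ℝ → ℝ) (T ε : ℝ) (b : HJ T) : ℝ≥0∞ :=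
  ENNReal.ofReal ε⁻¹ * Jeps f D σ T ε b

/-- Weak solutions to `b_t + f(b_x) = 0`. -/
def HJWeakSol (f : ℝ → ℝ) (T : ℝ) (b : HJ T) : Prop :=
  ∀ φ : TTest T, - pair T b.b (ptF φ.toFun) + pair T (fun p => f (b.ux.toFun p)) φ.toFun = 0

/-- The compatibility condition `b_x = μ(ι)` defining `𝓐`. -/
def APred (T : ℝ) (bm : HJ T × YM T) : Prop :=
  ∀ᵐ p ∂(volume.restrict (Icc (0:ℝ) T ×ˢ (univ : Set ℝ))),
    bm.1.ux.toFun p = bm.2.mom (fun l => l) p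

/-- The metric `d_𝓐`. -/
def dA (T : ℝ) (dw : YM T → YM T → ℝ)
    (x y : { bm : HJ T × YM T // APred T bm }) : ℝ :=
  dB T x.1.1 y.1.1 + dM T dw x.1.2 y.1.2

/-- The lift `𝓙_ε` of `J_ε` to `𝓐`. -/
def calJeps (f D σ : ℝ → ℝ) (T ε : ℝ) (x : { bm : HJ T × YM T // APred T bm }) : ℝ≥0∞ :=
  if ∀ p, x.1.2.m p = Measure.dirac (x.1.1.ux.toFun p) then Jeps f D σ T ε x.1.1 else ⊤

/-- The limiting functional `𝓙` on `𝓐`. -/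
def calJ (f σ : ℝ → ℝ) (T : ℝ) (x : { bm : HJ T × YM T // APred T bm }) : ℝ≥0∞ :=
  ⨆ φ : TTest T, ENNReal.ofReal
    (- pair T x.1.1.b (ptF φ.toFun) + pair T (x.1.2.mom f) φ.toFun
      - 1 / 2 * pair T (fun p => x.1.2.mom σ p * φ.toFun p) φ.toFun)

/-! ### Jump sets and BV solutions -/

/-- The function `ρ(v, u⁺, u⁻)` of Remark 2.3. -/
def rhoJ (f : ℝ → ℝ) (v a b : ℝ) : ℝ :=
  if v ∈ Icc (min a b) (max a b) then
    f b * (a - v) + f a * (v - b) - f v * (a - b)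
  else 0

/-! ### Riesz representation on a dense image -/

section Hilbert

open scoped InnerProductSpace

/-- Riesz representation for a functional `ℓ` bounded with respect to the seminorm `‖A ·‖`:
it is represented by a vector of the closed span of the image of `A`. -/
theorem exists_riesz {H V : Type*} [NormedAddCommGroup H] [InnerProductSpace ℝ H] [CompleteSpace H]
    [AddCommGroup V] [Module ℝ V] (A : V →ₗ[ℝ] H) (l : V →ₗ[ℝ] ℝ) (C : ℝ)
    (hC : ∀ v, |l v| ≤ C * ‖A v‖) :
    ∃ P ∈ closure (range A), ∀ v, l v = ⟪P, A v⟫_ℝ := by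
  let K := (LinearMap.range A).topologicalClosure
  have : CompleteSpace K := (LinearMap.range A).isClosed_topologicalClosure.completeSpace_coe
  have hmem : ∀ v, A v ∈ K := fun v =>
    (LinearMap.range A).le_topologicalClosure (LinearMap.mem_range_self A v)
  let e : V →ₗ[ℝ] K := A.codRestrict K hmem
  have hKset : (K : Set H) = closure (range A) := by
    rw [Submodule.topologicalClosure_coe, LinearMap.coe_range]
  have hd : DenseRange e := by
    intro x
    have hx : (x : H) ∈ closure (range A) := by rw [← hKset]; exact x.2
    rw [closure_subtype]
    convert hx using 2
    ext y
    constructor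
    · rintro ⟨_, ⟨v, rfl⟩, rfl⟩; exact ⟨v, rfl⟩
    · rintro ⟨v, rfl⟩; exact ⟨e v, ⟨v, rfl⟩, rfl⟩
  let g := l.extendOfNorm e
  have hg : ∀ v, g (e v) = l v := fun v =>
    LinearMap.extendOfNorm_eq hd ⟨C, hC⟩ v
  refine ⟨((InnerProductSpace.toDual ℝ K).symm g : K), ?_, fun v => ?_⟩
  · rw [← hKset]; exact Subtype.mem _
  · rw [← hg v, ← InnerProductSpace.toDual_symm_apply (𝕜 := ℝ) (y := g)]
    rfl

/-- The concave functional `v ↦ ⟪P, A v⟫ - ‖A v‖² / 2` has supremum `‖P‖² / 2` when `P` is a limit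
of vectors `A v`, since it equals `(‖P‖² - ‖P - A v‖²) / 2`. -/
theorem iSup_riesz {H V : Type*} [NormedAddCommGroup H] [InnerProductSpace ℝ H]
    (A : V → H) (P : H) (hP : P ∈ closure (range A)) :
    (⨆ v, ENNReal.ofReal (⟪P, A v⟫_ℝ - 1 / 2 * ‖A v‖ ^ 2)) = ENNReal.ofReal (1 / 2 * ‖P‖ ^ 2) := by
  apply le_antisymm
  · refine iSup_le fun v => ENNReal.ofReal_le_ofReal ?_
    have := norm_sub_sq_real P (A v)
    nlinarith [sq_nonneg ‖P - A v‖]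
  · obtain ⟨y, hy, hlim⟩ := mem_closure_iff_seq_limit.1 hP
    have h1 : Tendsto (fun n => ENNReal.ofReal (⟪P, y n⟫_ℝ - 1 / 2 * ‖y n‖ ^ 2)) atTop
        (𝓝 (ENNReal.ofReal (⟪P, P⟫_ℝ - 1 / 2 * ‖P‖ ^ 2))) := by
      refine (ENNReal.continuous_ofReal.tendsto _).comp ?_
      exact (tendsto_const_nhds.inner hlim).sub ((hlim.norm.pow 2).const_mul _)
    have h2 : ⟪P, P⟫_ℝ - 1 / 2 * ‖P‖ ^ 2 = 1 / 2 * ‖P‖ ^ 2 := by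
      rw [real_inner_self_eq_norm_sq]; ring
    rw [h2] at h1
    refine le_of_tendsto' h1 fun n => ?_
    obtain ⟨v, hv⟩ := hy n
    rw [← hv]
    exact le_iSup (fun v => ENNReal.ofReal (⟪P, A v⟫_ℝ - 1 / 2 * ‖A v‖ ^ 2)) v

theorem unique_riesz {H V : Type*} [NormedAddCommGroup H] [InnerProductSpace ℝ H]
    [AddCommGroup V] [Module ℝ V] (A : V →ₗ[ℝ] H) (P P' : H) (hP : P ∈ closure (range A))
    (hP' : P' ∈ closure (range A)) (h : ∀ v, ⟪P, A v⟫_ℝ = ⟪P', A v⟫_ℝ) : P = P' := by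
  have key : ∀ y ∈ closure (range A), ⟪P - P', y⟫_ℝ = 0 := by
    intro y hy
    have hc : IsClosed {y : H | ⟪P - P', y⟫_ℝ = 0} :=
      isClosed_eq (by fun_prop) continuous_const
    refine closure_minimal ?_ hc hy
    rintro _ ⟨v, rfl⟩
    simp [inner_sub_left, h v]
  have h0 : ⟪P - P', P - P'⟫_ℝ = 0 := by
    rw [inner_sub_right, key P hP, key P' hP', sub_zero]
  exact sub_eq_zero.1 (inner_self_eq_zero.1 h0)

/-- A family of quadratic polynomials bounded above controls its linear part:
optimise `s * a - s² * q / 2` over `s`. -/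
theorem sq_bound_of_scaling {a q M : ℝ} (hq : 0 ≤ q)
    (h : ∀ s : ℝ, s * a - 1 / 2 * (s ^ 2 * q) ≤ M) : a ^ 2 ≤ 2 * M * q := by
  rcases hq.eq_or_lt with rfl | hq
  · have ha : a = 0 := by
      by_contra ha
      have := h ((M + 1) / a)
      rw [div_mul_cancel₀ _ ha] at this
      linarith
    simp [ha]
  · have := h (a / q)
    have e : a / q * a - 1 / 2 * ((a / q) ^ 2 * q) = a ^ 2 / (2 * q) := by
      field_simp; ring
    rw [e, div_le_iff₀ (by positivity)] at this
    linarith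

end Hilbert

/-! ### Weak continuity in time -/

theorem integrable_sq_of_hasCompactSupport {g : ℝ → ℝ} (hg : Continuous g)
    (hc : HasCompactSupport g) : Integrable (fun x => g x ^ 2) :=
  Continuous.integrable_of_hasCompactSupport (by fun_prop)
    (hc.mono fun x hx h => hx (by simp [h]))

theorem STest.abs_le {N : ℝ} (φ : STest N) (h : (∫ x, deriv φ.toFun x ^ 2) = 1) (x : ℝ)
    (hx : x ∈ Ioo (-N) N) : |φ.toFun x| ≤ N + 1 / 2 := by
  have hd : Continuous (deriv φ.toFun) := φ.smooth.continuous_deriv (by simp)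
  have hdc : HasCompactSupport (deriv φ.toFun) := φ.cpt.deriv
  have hint : Integrable (fun x => deriv φ.toFun x ^ 2) :=
    integrable_sq_of_hasCompactSupport hd hdc
  have hdiff : Differentiable ℝ φ.toFun := φ.smooth.differentiable (by simp)
  have h0 : φ.toFun (-N) = 0 := by
    by_contra hne
    exact lt_irrefl _ (φ.supp hne).1
  have hftc : ∫ y in (-N)..x, deriv φ.toFun y = φ.toFun x := by
    rw [intervalIntegral.integral_deriv_eq_sub (fun y _ => hdiff y)
      (hd.intervalIntegrable _ _), h0, sub_zero]
  have hle : -N ≤ x := hx.1.le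
  rw [← hftc]
  calc |∫ y in (-N)..x, deriv φ.toFun y| ≤ ∫ y in (-N)..x, |deriv φ.toFun y| :=
        intervalIntegral.abs_integral_le_integral_abs hle
    _ ≤ ∫ y in (-N)..x, (1 / 2 + 1 / 2 * deriv φ.toFun y ^ 2) := by
        refine intervalIntegral.integral_mono_on hle (hd.abs.intervalIntegrable _ _)
          (Continuous.intervalIntegrable (by fun_prop) _ _) fun y _ => ?_
        nlinarith [sq_nonneg (|deriv φ.toFun y| - 1), sq_abs (deriv φ.toFun y)]
    _ = (x + N) / 2 + 1 / 2 * ∫ y in (-N)..x, deriv φ.toFun y ^ 2 := by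
        rw [intervalIntegral.integral_add (by simp)
          (Continuous.intervalIntegrable (by fun_prop) _ _)]
        simp; ring
    _ ≤ (x + N) / 2 + 1 / 2 * 1 := by
        gcongr
        rw [intervalIntegral.integral_of_le hle, ← h]
        exact setIntegral_le_integral hint (ae_of_all _ fun y => sq_nonneg _)
    _ ≤ N + 1 / 2 := by linarith [hx.2]

theorem negNorm_bddAbove {N : ℝ} (w : ℝ → ℝ) (hw : ∀ x, |w x| ≤ 1) :
    BddAbove { r : ℝ | ∃ φ : STest N, (∫ x, deriv φ.toFun x ^ 2) = 1 ∧
      r = ∫ x, w x * φ.toFun x } := by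
  refine ⟨(N + 1 / 2) * volume.real (Ioo (-N) N), ?_⟩
  rintro r ⟨φ, h, rfl⟩
  have e : ∫ x, w x * φ.toFun x = ∫ x in Ioo (-N) N, w x * φ.toFun x := by
    refine (setIntegral_eq_integral_of_forall_compl_eq_zero fun x hx => ?_).symm
    have : φ.toFun x = 0 := by
      by_contra hne
      exact hx (φ.supp hne)
    simp [this]
  rw [e]
  refine (le_abs_self _).trans ?_
  rw [← Real.norm_eq_abs]
  refine norm_setIntegral_le_of_norm_le_const (by simp) fun x hx => ?_
  rw [Real.norm_eq_abs, abs_mul]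
  calc |w x| * |φ.toFun x| ≤ 1 * |φ.toFun x| := by gcongr; exact hw x
    _ ≤ _ := by rw [one_mul]; exact φ.abs_le h x hx

theorem abs_le_negNorm {N : ℝ} (w : ℝ → ℝ) (hw : ∀ x, |w x| ≤ 1) (φ : STest N)
    (h : (∫ x, deriv φ.toFun x ^ 2) = 1) : |∫ x, w x * φ.toFun x| ≤ negNorm N w := by
  refine abs_le'.2 ⟨le_csSup (negNorm_bddAbove w hw) ⟨φ, h, rfl⟩, ?_⟩
  refine le_csSup (negNorm_bddAbove w hw)
    ⟨⟨fun x => - φ.toFun x, φ.smooth.neg, ?_, ?_⟩, ?_, ?_⟩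
  · exact φ.cpt.comp_left (g := fun y : ℝ => -y) (by simp)
  · intro x hx
    exact φ.supp (by simpa using hx)
  · simpa [deriv.fun_neg] using h
  · simp [integral_neg]

theorem negNorm_nonneg {N : ℝ} (w : ℝ → ℝ) (hw : ∀ x, |w x| ≤ 1) : 0 ≤ negNorm N w := by
  by_cases hne : ∃ φ : STest N, (∫ x, deriv φ.toFun x ^ 2) = 1
  · obtain ⟨φ, h⟩ := hne
    exact (abs_nonneg _).trans (abs_le_negNorm w hw φ h)
  · unfold negNorm
    refine Real.sSup_nonneg ?_
    rintro x ⟨φ, h, -⟩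
    exact absurd ⟨φ, h⟩ hne

theorem negNorm_lt_of_dU_lt (u v : ℝ → ℝ) (huv : ∀ x, |u x - v x| ≤ 1) (n : ℕ) {η : ℝ}
    (hη : 0 < η) (h : dU u v < (2 : ℝ)⁻¹ ^ (n + 1) * (η / (1 + η))) :
    negNorm ((n : ℝ) + 1) (fun x => u x - v x) < η := by
  have hnn : ∀ k : ℕ, 0 ≤ negNorm ((k : ℝ) + 1) (fun x => u x - v x) :=
    fun k => negNorm_nonneg _ huv
  have hterm : ∀ k : ℕ, 0 ≤ (2 : ℝ)⁻¹ ^ (k + 1) *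
    (negNorm ((k : ℝ) + 1) (fun x => u x - v x) /
      (1 + negNorm ((k : ℝ) + 1) (fun x => u x - v x))) := fun k => by
    have := hnn k
    positivity
  have hsum : Summable fun k : ℕ => (2 : ℝ)⁻¹ ^ (k + 1) *
    (negNorm ((k : ℝ) + 1) (fun x => u x - v x) /
      (1 + negNorm ((k : ℝ) + 1) (fun x => u x - v x))) := by
    refine Summable.of_nonneg_of_le hterm (fun k => ?_)
      ((summable_nat_add_iff 1).2 (summable_geometric_of_lt_one (r := (2 : ℝ)⁻¹)
        (by norm_num) (by norm_num)))
    refine mul_le_of_le_one_right (by positivity) ?_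
    have := hnn k
    rw [div_le_one (by positivity)]
    linarith
  have h1 := (hsum.le_tsum n (fun k _ => hterm k)).trans_lt h
  have h2 := lt_of_mul_lt_mul_left h1 (by positivity)
  have := hnn n
  rw [div_lt_div_iff₀ (by positivity) (by positivity)] at h2
  nlinarith

/-- Elements of `𝒰` are continuous in time when tested against a smooth function of `x`. -/
theorem cU.continuousOn_integral {T : ℝ} (u : cU T) (φ : ℝ → ℝ) (hs : ContDiff ℝ (⊤ : ℕ∞) φ)
    (hc : HasCompactSupport φ) :
    ContinuousOn (fun t => ∫ x, u.toFun (t, x) * φ x) (Icc 0 T) := by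
  have hφ : Continuous φ := hs.continuous
  have hd : Continuous (deriv φ) := hs.continuous_deriv (by simp)
  have hdi : Integrable (fun x => deriv φ x ^ 2) :=
    integrable_sq_of_hasCompactSupport hd hc.deriv
  have hint : ∀ t, Integrable (fun x => u.toFun (t, x) * φ x) := fun t =>
    (hφ.integrable_of_hasCompactSupport hc).bdd_mul (c := 1)
      (u.meas.comp measurable_prodMk_left).aestronglyMeasurable
      (ae_of_all _ fun x => by
        have := u.mem01 (t, x)
        rw [Real.norm_eq_abs, abs_le]; constructor <;> linarith [this.1, this.2])
  have hdiff : ∀ t s x, |u.toFun (t, x) - u.toFun (s, x)| ≤ 1 := fun t s x => by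
    have h1 := u.mem01 (t, x)
    have h2 := u.mem01 (s, x)
    rw [abs_le]; constructor <;> linarith [h1.1, h1.2, h2.1, h2.2]
  rcases (integral_nonneg (f := fun x => deriv φ x ^ 2) (fun x => sq_nonneg _)).eq_or_lt with
    h0 | hpos
  -- A compactly supported function with vanishing derivative is zero.
  · have hz : (fun x => deriv φ x ^ 2) = 0 := by
      have := (integral_eq_zero_iff_of_nonneg (fun x => sq_nonneg (deriv φ x)) hdi).1 h0.symm
      exact (Continuous.ae_eq_iff_eq volume (hd.pow 2) continuous_const).1 this
    have hz' : ∀ x, deriv φ x = 0 := fun x => by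
      have := congrFun hz x
      simpa using this
    have hφ0 : ∀ x, φ x = 0 := by
      obtain ⟨y, hy⟩ : ∃ y, φ y = 0 := by
        by_contra hne
        push Not at hne
        have hsup : tsupport φ = univ := by
          rw [tsupport, Function.support_eq_univ (f := φ) hne, closure_univ]
        rw [HasCompactSupport, hsup] at hc
        exact noncompact_univ ℝ hc
      intro x
      rw [is_const_of_deriv_eq_zero (hs.differentiable (by simp)) hz' x y, hy]
    simp [hφ0, continuousOn_const]
  · set c := ∫ x, deriv φ x ^ 2 with hcdef
    obtain ⟨R, hR⟩ := hc.isCompact.isBounded.subset_ball 0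
    obtain ⟨n, hn⟩ := exists_nat_ge R
    have hsq : 0 < Real.sqrt c := Real.sqrt_pos.2 hpos
    let ψ : STest ((n : ℝ) + 1) := ⟨fun x => (Real.sqrt c)⁻¹ * φ x, contDiff_const.mul hs,
      hc.mul_left, fun x hx => by
        have hx' : φ x ≠ 0 := fun h => hx (by simp [h])
        have := hR (subset_tsupport φ hx')
        rw [mem_ball_zero_iff, Real.norm_eq_abs, abs_lt] at this
        constructor <;> linarith [this.1, this.2]⟩
    have hψ : (∫ x, deriv ψ.toFun x ^ 2) = 1 := by
      have : ∀ x, deriv ψ.toFun x ^ 2 = c⁻¹ * deriv φ x ^ 2 := fun x => by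
        simp only [ψ]
        rw [deriv_const_mul _ (hs.differentiable (by simp) x), mul_pow, inv_pow,
          Real.sq_sqrt hpos.le]
      simp_rw [this]
      rw [integral_const_mul, ← hcdef, inv_mul_cancel₀ hpos.ne']
    intro t₀ ht₀
    rw [Metric.continuousWithinAt_iff]
    intro δ hδ
    set η := δ / Real.sqrt c with hηdef
    have hη : 0 < η := by positivity
    obtain ⟨ζ, hζ, H⟩ := u.cont t₀ ht₀ ((2 : ℝ)⁻¹ ^ (n + 1) * (η / (1 + η))) (by positivity)
    refine ⟨ζ, hζ, fun t ht hd => ?_⟩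
    have h1 := negNorm_lt_of_dU_lt _ _ (hdiff t t₀) n hη (H t ht (by simpa [Real.dist_eq] using hd))
    have h2 := abs_le_negNorm _ (hdiff t t₀) ψ hψ
    rw [Real.dist_eq, ← integral_sub (hint t) (hint t₀)]
    have e : ∫ x, (u.toFun (t, x) * φ x - u.toFun (t₀, x) * φ x)
        = Real.sqrt c * ∫ x, (u.toFun (t, x) - u.toFun (t₀, x)) * ψ.toFun x := by
      rw [← integral_const_mul]
      congr 1
      ext x
      simp only [ψ]
      field_simp
    rw [e, abs_mul, abs_of_pos hsq]
    calc Real.sqrt c * _ < Real.sqrt c * η := by gcongr; exact h2.trans_lt h1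
      _ = δ := by rw [hηdef]; field_simp

theorem exists_box {k : ℝ × ℝ → ℝ} (hk : HasCompactSupport k) :
    ∃ R > 0, ∀ p : ℝ × ℝ, p.2 ∉ Icc (-R) R → k p = 0 := by
  obtain ⟨R, hR⟩ := hk.isCompact.isBounded.subset_closedBall 0
  refine ⟨max R 1, by positivity, fun p hp => ?_⟩
  refine image_eq_zero_of_notMem_tsupport fun hmem => hp ?_
  have h := hR hmem
  rw [mem_closedBall_zero_iff, Prod.norm_def] at h
  have h2 : |p.2| ≤ R := (le_max_right _ _).trans h
  exact abs_le.1 (h2.trans (le_max_left R 1))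

theorem cU.integrable_slice {T : ℝ} (u : cU T) (φ : TTestC) (t s : ℝ) :
    Integrable (fun x => u.toFun (t, x) * φ.toFun (s, x)) := by
  have hφ : Continuous φ.toFun := φ.smooth.continuous
  obtain ⟨R, hR, hbox⟩ := exists_box φ.cpt
  have hcs : HasCompactSupport (fun x => φ.toFun (s, x)) :=
    HasCompactSupport.intro isCompact_Icc (fun x hx => hbox (s, x) hx)
  exact ((show Continuous fun x => φ.toFun (s, x) by fun_prop).integrable_of_hasCompactSupport
    hcs).bdd_mul (c := 1)
    (u.meas.comp measurable_prodMk_left).aestronglyMeasurable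
    (ae_of_all _ fun x => by
      have := u.mem01 (t, x)
      rw [Real.norm_eq_abs, abs_le]; constructor <;> linarith [this.1, this.2])

/-- Weak continuity extends to time dependent test functions: freezing the time in the test
function costs an error controlled by its uniform continuity. -/
theorem cU.continuousOn_slice {T : ℝ} (u : cU T) (φ : TTestC) :
    ContinuousOn (fun t => ∫ x, u.toFun (t, x) * φ.toFun (t, x)) (Icc 0 T) := by
  have hφ : Continuous φ.toFun := φ.smooth.continuous
  obtain ⟨R, hR, hbox⟩ := exists_box φ.cpt
  have hout : ∀ t x, x ∉ Icc (-R) R → φ.toFun (t, x) = 0 := fun t x hx => hbox (t, x) hx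
  have hcs : ∀ t, HasCompactSupport (fun x => φ.toFun (t, x)) := fun t =>
    HasCompactSupport.intro isCompact_Icc (fun x hx => hout t x hx)
  have hint := u.integrable_slice φ
  intro t₀ ht₀
  have h1 : ContinuousWithinAt (fun t => ∫ x, u.toFun (t, x) * φ.toFun (t₀, x)) (Icc 0 T) t₀ :=
    u.continuousOn_integral _ (φ.smooth.comp (contDiff_const.prodMk contDiff_id)) (hcs t₀) t₀ ht₀
  have h2 : Tendsto (fun t => ∫ x, u.toFun (t, x) * (φ.toFun (t, x) - φ.toFun (t₀, x)))
      (𝓝[Icc 0 T] t₀) (𝓝 0) := by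
    have huc := φ.cpt.uniformContinuous_of_continuous hφ
    rw [Metric.tendsto_nhds]
    intro δ hδ
    have hV : 0 < volume.real (Icc (-R) R) + 1 := by positivity
    obtain ⟨ζ, hζ, H⟩ := Metric.uniformContinuous_iff.1 huc
      (δ / (volume.real (Icc (-R) R) + 1)) (by positivity)
    filter_upwards [mem_nhdsWithin_of_mem_nhds (Metric.ball_mem_nhds t₀ hζ)] with t ht
    rw [dist_zero_right]
    have e : ∫ x, u.toFun (t, x) * (φ.toFun (t, x) - φ.toFun (t₀, x))
        = ∫ x in Icc (-R) R, u.toFun (t, x) * (φ.toFun (t, x) - φ.toFun (t₀, x)) :=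
      (setIntegral_eq_integral_of_forall_compl_eq_zero fun x hx => by
        simp [hout _ x hx]).symm
    rw [e]
    calc _ ≤ δ / (volume.real (Icc (-R) R) + 1) * volume.real (Icc (-R) R) := by
          refine norm_setIntegral_le_of_norm_le_const (by simp) fun x hx => ?_
          have hd : dist (φ.toFun (t, x)) (φ.toFun (t₀, x)) < _ := H (by
            rw [Prod.dist_eq]; simpa using ht)
          rw [Real.norm_eq_abs, abs_mul]
          rw [Real.dist_eq] at hd
          have hm := u.mem01 (t, x)
          rw [abs_of_nonneg hm.1]
          calc _ ≤ 1 * _ := mul_le_mul_of_nonneg_right hm.2 (abs_nonneg _)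
            _ ≤ _ := by rw [one_mul]; exact hd.le
      _ < δ := by
          rw [div_mul_eq_mul_div, div_lt_iff₀ hV]
          nlinarith
  have h3 := h1.tendsto.add h2
  rw [add_zero] at h3
  refine h3.congr fun t => ?_
  rw [← integral_add (hint t t₀) (by
    simp_rw [mul_sub]
    exact (hint t t).sub (hint t t₀))]
  congr 1
  ext x
  ring

/-! ### Integrability against test functions -/

theorem TTestC.continuous_px (φ : TTestC) : Continuous (pxF φ.toFun) :=
  (φ.smooth.continuous_fderiv (by simp)).clm_apply continuous_const

theorem TTestC.continuous_pt (φ : TTestC) : Continuous (ptF φ.toFun) :=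
  (φ.smooth.continuous_fderiv (by simp)).clm_apply continuous_const

theorem TTestC.cpt_px (φ : TTestC) : HasCompactSupport (pxF φ.toFun) :=
  φ.cpt.fderiv_apply ℝ _

theorem TTestC.cpt_pt (φ : TTestC) : HasCompactSupport (ptF φ.toFun) :=
  φ.cpt.fderiv_apply ℝ _

/-- A test function supported in `(0,T) × ℝ`, seen as a test function on `[0,T] × ℝ`. -/
def TTest.toC {T : ℝ} (φ : TTest T) : TTestC := ⟨φ.toFun, φ.smooth, φ.cpt⟩

theorem L1loc.integrable_mul {T : ℝ} {h k : ℝ × ℝ → ℝ} (hh : L1loc T h) (hk : Continuous k)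
    (hc : HasCompactSupport k) :
    IntegrableOn (fun p => h p * k p) (Icc (0:ℝ) T ×ˢ (univ : Set ℝ)) := by
  obtain ⟨R, hR, hout⟩ := exists_box hc
  obtain ⟨C, hC⟩ := hk.bounded_above_of_compact_support hc
  have h1 : IntegrableOn (fun p => h p * k p) (Icc (0:ℝ) T ×ˢ Icc (-R) R) :=
    (hh.2 R hR).mul_bdd (c := C) hk.aestronglyMeasurable (ae_of_all _ hC)
  refine h1.of_forall_sdiff_eq_zero (measurableSet_Icc.prod MeasurableSet.univ) fun p hp => ?_
  have : p.2 ∉ Icc (-R) R := fun h2 => hp.2 ⟨hp.1.1, h2⟩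
  simp [hout p this]

theorem L1loc.of_bdd {T : ℝ} {h : ℝ × ℝ → ℝ} (hm : Measurable h) {C : ℝ}
    (hC : ∀ p, |h p| ≤ C) : L1loc T h := by
  refine ⟨hm, fun R _ => ?_⟩
  refine Measure.integrableOn_of_bounded (M := C) ?_ hm.aestronglyMeasurable
    (ae_of_all _ hC)
  exact ((isCompact_Icc.prod isCompact_Icc).measure_lt_top).ne

theorem L1loc.bdd_mul {T : ℝ} {h w : ℝ × ℝ → ℝ} (hm : Measurable h) {C : ℝ}
    (hC : ∀ p, |h p| ≤ C) (hw : L1loc T w) : L1loc T (fun p => h p * w p) :=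
  ⟨hm.mul hw.1, fun R hR => (hw.2 R hR).bdd_mul hm.aestronglyMeasurable (ae_of_all _ hC)⟩

theorem L2loc.l1 {T : ℝ} {w : ℝ × ℝ → ℝ} (hw : L2loc T w) : L1loc T w := by
  refine ⟨hw.1, fun R hR => ?_⟩
  have h1 : IntegrableOn (fun _ : ℝ × ℝ => (1 : ℝ)) (Icc (0:ℝ) T ×ˢ Icc (-R) R) :=
    integrableOn_const ((isCompact_Icc.prod isCompact_Icc).measure_lt_top).ne
  refine (h1.add (hw.2 R hR)).mono' hw.1.aestronglyMeasurable (ae_of_all _ fun p => ?_)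
  rw [Real.norm_eq_abs]
  simp only [Pi.add_apply]
  nlinarith [sq_nonneg (|w p| - 1), sq_abs (w p)]

theorem measurable_comp_unit {F : ℝ → ℝ} (hF : ContinuousOn F (Icc 0 1)) {u : ℝ × ℝ → ℝ}
    (hu : Measurable u) (h01 : ∀ p, u p ∈ Icc (0:ℝ) 1) : Measurable fun p => F (u p) := by
  have h : (fun p => F (u p)) =
      fun p => IccExtend (zero_le_one' ℝ) ((Icc (0:ℝ) 1).domRestrict F) (u p) := by
    ext p
    rw [IccExtend_of_mem _ _ (h01 p)]
    rfl
  rw [h]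
  exact (hF.domRestrict.Icc_extend').measurable.comp hu

theorem bdd_comp_unit {F : ℝ → ℝ} (hF : ContinuousOn F (Icc 0 1)) {u : ℝ × ℝ → ℝ}
    (h01 : ∀ p, u p ∈ Icc (0:ℝ) 1) : ∃ C, ∀ p, |F (u p)| ≤ C := by
  obtain ⟨C, hC⟩ := isCompact_Icc.exists_bound_of_continuousOn hF
  exact ⟨C, fun p => hC _ (h01 p)⟩

/-! ### Time cutoffs -/

theorem deriv_smoothTransition_eq_zero {s : ℝ} (hs : s ∉ Icc (0:ℝ) 1) :
    deriv Real.smoothTransition s = 0 := by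
  rw [mem_Icc, not_and_or, not_le, not_le] at hs
  rcases hs with hs | hs
  · have : Real.smoothTransition =ᶠ[𝓝 s] fun _ => 0 := by
      filter_upwards [Iio_mem_nhds hs] with x hx
      exact Real.smoothTransition.zero_of_nonpos (le_of_lt hx)
    rw [this.deriv_eq, deriv_const]
  · have : Real.smoothTransition =ᶠ[𝓝 s] fun _ => 1 := by
      filter_upwards [Ioi_mem_nhds hs] with x hx
      exact Real.smoothTransition.one_of_one_le (le_of_lt hx)
    rw [this.deriv_eq, deriv_const]

theorem continuous_deriv_smoothTransition : Continuous (deriv Real.smoothTransition) :=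
  (Real.smoothTransition.contDiff (n := 1)).continuous_deriv (by simp)

theorem integrable_deriv_smoothTransition : Integrable (deriv Real.smoothTransition) :=
  continuous_deriv_smoothTransition.integrable_of_hasCompactSupport
    (HasCompactSupport.intro isCompact_Icc fun _ hs => deriv_smoothTransition_eq_zero hs)

theorem integral_deriv_smoothTransition : ∫ s, deriv Real.smoothTransition s = 1 := by
  rw [← setIntegral_eq_integral_of_forall_compl_eq_zero
    (fun _ hs => deriv_smoothTransition_eq_zero hs), integral_Icc_eq_integral_Ioc,
    ← intervalIntegral.integral_of_le zero_le_one,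
    intervalIntegral.integral_deriv_eq_sub
      (fun x _ => (Real.smoothTransition.contDiff (n := 1)).differentiable (by simp) x)
      (continuous_deriv_smoothTransition.intervalIntegrable _ _)]
  simp

/-- The rescaled derivatives of a smooth step form an approximate identity at `a`. -/
theorem tendsto_peak {G : ℝ → ℝ} (hG : Continuous G) {C : ℝ} (hC : ∀ t, |G t| ≤ C) (a b : ℝ)
    {k : ℕ → ℝ} (hk : ∀ n, 0 < k n) (hk' : Tendsto k atTop atTop) :
    Tendsto (fun n => ∫ t, k n * deriv Real.smoothTransition (k n * (t - a) + b) * G t) atTop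
      (𝓝 (G a)) := by
  have e : ∀ n, ∫ t, k n * deriv Real.smoothTransition (k n * (t - a) + b) * G t
      = ∫ s, deriv Real.smoothTransition s * G (a + (s - b) / k n) := fun n => by
    set F : ℝ → ℝ := fun s => deriv Real.smoothTransition s * G (a + (s - b) / k n) with hF
    have h0 := (hk n).ne'
    have h1 : ∀ t, k n * deriv Real.smoothTransition (k n * (t - a) + b) * G t
        = k n * F (k n * (t - a) + b) := fun t => by
      have : a + (k n * (t - a) + b - b) / k n = t := by field_simp; ring
      simp only [hF]
      rw [this, mul_assoc]
    simp_rw [h1]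
    rw [integral_const_mul, integral_sub_right_eq_self (fun t => F (k n * t + b)),
      Measure.integral_comp_mul_left (fun s => F (s + b)), integral_add_right_eq_self F,
      abs_of_pos (inv_pos.2 (hk n)), smul_eq_mul, ← mul_assoc, mul_inv_cancel₀ h0, one_mul]
  simp_rw [e]
  have hlim : Tendsto (fun n => ∫ s, deriv Real.smoothTransition s * G (a + (s - b) / k n)) atTop
      (𝓝 (∫ s, deriv Real.smoothTransition s * G a)) := by
    refine tendsto_integral_of_dominated_convergence
      (fun s => |deriv Real.smoothTransition s| * C) (fun n => ?_)
      (integrable_deriv_smoothTransition.abs.mul_const C) (fun n => ae_of_all _ fun s => ?_)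
      (ae_of_all _ fun s => ?_)
    · exact (continuous_deriv_smoothTransition.mul
        (hG.comp (by fun_prop))).aestronglyMeasurable
    · rw [Real.norm_eq_abs, abs_mul]
      exact mul_le_mul_of_nonneg_left (hC _) (abs_nonneg _)
    · refine tendsto_const_nhds.mul ((hG.tendsto a).comp ?_)
      have := (tendsto_const_nhds (x := a)).add (hk'.const_div_atTop (s - b))
      simpa using this
  rwa [integral_mul_const, integral_deriv_smoothTransition, one_mul] at hlim

/-- The slope of the `n`-th cutoff; it is chosen so that `cutRate T n * T ≥ 4`. -/
def cutRate (T : ℝ) (n : ℕ) : ℝ := ((n : ℝ) + 4) / T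

/-- The `n`-th time cutoff: `0` near `t = 0` and `t = T`, and `1` in between. -/
def cut (T : ℝ) (n : ℕ) (t : ℝ) : ℝ :=
  Real.smoothTransition (cutRate T n * (t - 0) + (-1))
    - Real.smoothTransition (cutRate T n * (t - T) + 2)

/-- The derivative of `cut`. -/
def cutD (T : ℝ) (n : ℕ) (t : ℝ) : ℝ :=
  cutRate T n * deriv Real.smoothTransition (cutRate T n * (t - 0) + (-1))
    - cutRate T n * deriv Real.smoothTransition (cutRate T n * (t - T) + 2)

theorem cutRate_pos {T : ℝ} (hT : 0 < T) (n : ℕ) : 0 < cutRate T n := by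
  unfold cutRate; positivity

theorem cutRate_mul {T : ℝ} (hT : 0 < T) (n : ℕ) : 4 ≤ cutRate T n * T := by
  unfold cutRate; rw [div_mul_cancel₀ _ hT.ne']; linarith [n.cast_nonneg (α := ℝ)]

theorem tendsto_cutRate {T : ℝ} (hT : 0 < T) : Tendsto (cutRate T) atTop atTop :=
  (tendsto_atTop_add_const_right _ _ tendsto_natCast_atTop_atTop).atTop_div_const hT

theorem cut_contDiff (T : ℝ) (n : ℕ) : ContDiff ℝ (⊤ : ℕ∞) (cut T n) := by
  unfold cut
  exact (Real.smoothTransition.contDiff.comp (by fun_prop)).sub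
    (Real.smoothTransition.contDiff.comp (by fun_prop))

theorem hasDerivAt_cut (T : ℝ) (n : ℕ) (t : ℝ) : HasDerivAt (cut T n) (cutD T n t) t := by
  have h : ∀ s, HasDerivAt Real.smoothTransition (deriv Real.smoothTransition s) s := fun s =>
    ((Real.smoothTransition.contDiff (n := 1)).differentiable (by simp) s).hasDerivAt
  have hl : ∀ a b : ℝ, HasDerivAt (fun t => cutRate T n * (t - a) + b) (cutRate T n) t :=
    fun a b => by
      simpa using (((hasDerivAt_id t).sub_const a).const_mul (cutRate T n)).add_const b
  have := ((h _).comp t (hl 0 (-1))).sub ((h _).comp t (hl T 2))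
  refine this.congr_deriv ?_
  unfold cutD
  ring

theorem abs_cut_le (T : ℝ) (n : ℕ) (t : ℝ) : |cut T n t| ≤ 1 := by
  unfold cut
  have h1 := Real.smoothTransition.nonneg
  have h2 := Real.smoothTransition.le_one
  rw [abs_le]
  constructor <;>
    linarith [h1 (cutRate T n * (t - 0) + (-1)), h2 (cutRate T n * (t - 0) + (-1)),
      h1 (cutRate T n * (t - T) + 2), h2 (cutRate T n * (t - T) + 2)]

theorem cut_eq_zero {T : ℝ} (hT : 0 < T) (n : ℕ) {t : ℝ} (ht : t ∉ Ioo (0:ℝ) T) :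
    cut T n t = 0 := by
  have hk := cutRate_pos hT n
  have hk' := cutRate_mul hT n
  rw [mem_Ioo, not_and_or, not_lt, not_lt] at ht
  unfold cut
  rcases ht with ht | ht
  · rw [Real.smoothTransition.zero_of_nonpos (by nlinarith),
      Real.smoothTransition.zero_of_nonpos (by nlinarith), sub_zero]
  · rw [Real.smoothTransition.one_of_one_le (by nlinarith),
      Real.smoothTransition.one_of_one_le (by nlinarith), sub_self]

theorem tendsto_cut {T : ℝ} (hT : 0 < T) {t : ℝ} (ht : t ∈ Ioo (0:ℝ) T) :
    Tendsto (fun n => cut T n t) atTop (𝓝 1) := by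
  have h1 := (tendsto_cutRate hT).atTop_mul_const ht.1
  have h2 := (tendsto_cutRate hT).atTop_mul_const (sub_pos.2 ht.2)
  refine tendsto_const_nhds.congr' ?_
  filter_upwards [h1.eventually_ge_atTop 2, h2.eventually_ge_atTop 2] with n hn1 hn2
  unfold cut
  rw [Real.smoothTransition.one_of_one_le (by linarith),
    Real.smoothTransition.zero_of_nonpos (by linarith), sub_zero]

theorem cutD_eq_zero {T : ℝ} (hT : 0 < T) (n : ℕ) {t : ℝ} (ht : t ∉ Icc (0:ℝ) T) :
    cutD T n t = 0 := by
  have hk := cutRate_pos hT n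
  have hk' := cutRate_mul hT n
  have a1 : deriv Real.smoothTransition (cutRate T n * (t - 0) + (-1)) = 0 :=
    deriv_smoothTransition_eq_zero fun h => ht ⟨by nlinarith [h.1], by nlinarith [h.2]⟩
  have a2 : deriv Real.smoothTransition (cutRate T n * (t - T) + 2) = 0 :=
    deriv_smoothTransition_eq_zero fun h => ht ⟨by nlinarith [h.1], by nlinarith [h.2]⟩
  rw [cutD, a1, a2, mul_zero, sub_zero]

theorem continuous_cutD (T : ℝ) (n : ℕ) : Continuous (cutD T n) := by
  unfold cutD
  have := continuous_deriv_smoothTransition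
  fun_prop

/-- The derivative of the cutoff converges to `δ₀ - δ_T`. -/
theorem tendsto_integral_cutD {T : ℝ} (hT : 0 < T) {g : ℝ → ℝ} (hg : ContinuousOn g (Icc 0 T)) :
    Tendsto (fun n => ∫ t in Icc 0 T, cutD T n t * g t) atTop (𝓝 (g 0 - g T)) := by
  set G : ℝ → ℝ := IccExtend hT.le ((Icc (0:ℝ) T).domRestrict g) with hGdef
  have hGc : Continuous G := hg.domRestrict.Icc_extend'
  have hGe : ∀ t ∈ Icc (0:ℝ) T, G t = g t := fun t ht => by
    rw [hGdef, IccExtend_of_mem _ _ ht]; rfl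
  obtain ⟨C, hC⟩ := isCompact_Icc.exists_bound_of_continuousOn hg
  have hGb : ∀ t, |G t| ≤ C := fun t => hC _ (projIcc 0 T hT.le t).2
  have e : ∀ n, ∫ t in Icc 0 T, cutD T n t * g t =
      (∫ t, cutRate T n * deriv Real.smoothTransition (cutRate T n * (t - 0) + (-1)) * G t)
      - ∫ t, cutRate T n * deriv Real.smoothTransition (cutRate T n * (t - T) + 2) * G t := by
    intro n
    have hk := cutRate_pos hT n
    have hi : ∀ a b : ℝ, Integrable
        fun t => cutRate T n * deriv Real.smoothTransition (cutRate T n * (t - a) + b) * G t := by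
      intro a b
      have h1 := (integrable_deriv_smoothTransition.comp_add_right b).comp_mul_left' hk.ne'
      have h2 := (h1.comp_sub_right a).const_mul (cutRate T n)
      exact h2.mul_bdd (c := C) hGc.aestronglyMeasurable (ae_of_all _ hGb)
    rw [← integral_sub (hi _ _) (hi _ _),
      setIntegral_congr_fun measurableSet_Icc (g := fun t => cutD T n t * G t)
        (fun t ht => by simp only [hGe t ht]),
      setIntegral_eq_integral_of_forall_compl_eq_zero
        (fun t ht => by rw [cutD_eq_zero hT n ht, zero_mul])]
    congr 1
    ext t
    unfold cutD
    ring
  simp_rw [e]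
  have := (tendsto_peak hGc hGb 0 (-1) (cutRate_pos hT) (tendsto_cutRate hT)).sub
    (tendsto_peak hGc hGb T 2 (cutRate_pos hT) (tendsto_cutRate hT))
  rwa [hGe 0 (left_mem_Icc.2 hT.le), hGe T (right_mem_Icc.2 hT.le)] at this

/-- The product of a test function with the `n`-th time cutoff. -/
def cutTest {T : ℝ} (hT : 0 < T) (n : ℕ) (φ : TTestC) : TTest T where
  toFun p := cut T n p.1 * φ.toFun p
  smooth := ((cut_contDiff T n).comp contDiff_fst).mul φ.smooth
  cpt := φ.cpt.mul_left
  supp p hp := ⟨by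
    by_contra h
    exact hp (by simp [cut_eq_zero hT n h]), trivial⟩

theorem fderiv_cutTest {T : ℝ} (hT : 0 < T) (n : ℕ) (φ : TTestC) (p v : ℝ × ℝ) :
    fderiv ℝ (cutTest hT n φ).toFun p v
      = cut T n p.1 * fderiv ℝ φ.toFun p v + cutD T n p.1 * v.1 * φ.toFun p := by
  have h1 : HasFDerivAt (fun p : ℝ × ℝ => cut T n p.1)
      (cutD T n p.1 • ContinuousLinearMap.fst ℝ ℝ ℝ) p :=
    (hasDerivAt_cut T n p.1).comp_hasFDerivAt p hasFDerivAt_fst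
  have h2 := h1.mul (φ.smooth.differentiable (by simp) p).hasFDerivAt
  have h3 : HasFDerivAt (cutTest hT n φ).toFun _ p := h2
  rw [h3.fderiv]
  simp
  ring

theorem pxF_cutTest {T : ℝ} (hT : 0 < T) (n : ℕ) (φ : TTestC) (p : ℝ × ℝ) :
    pxF (cutTest hT n φ).toFun p = cut T n p.1 * pxF φ.toFun p := by
  unfold pxF; rw [fderiv_cutTest]; simp

theorem ptF_cutTest {T : ℝ} (hT : 0 < T) (n : ℕ) (φ : TTestC) (p : ℝ × ℝ) :
    ptF (cutTest hT n φ).toFun p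
      = cut T n p.1 * ptF φ.toFun p + cutD T n p.1 * φ.toFun p := by
  unfold ptF; rw [fderiv_cutTest]; simp

theorem strip_ae_eq (T : ℝ) :
    (Icc (0:ℝ) T ×ˢ (univ : Set ℝ) : Set (ℝ × ℝ)) =ᵐ[volume] Ioo (0:ℝ) T ×ˢ (univ : Set ℝ) :=
  Measure.set_prod_ae_eq Ioo_ae_eq_Icc.symm (ae_eq_refl _)

theorem tendsto_integral_strip {T : ℝ} {F : ℝ × ℝ → ℝ}
    (hF : IntegrableOn F (Icc (0:ℝ) T ×ˢ (univ : Set ℝ))) {c : ℕ → ℝ → ℝ}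
    (hcc : ∀ n, Continuous (c n)) (hc : ∀ n t, |c n t| ≤ 1)
    (hlim : ∀ t ∈ Ioo (0:ℝ) T, Tendsto (fun n => c n t) atTop (𝓝 1)) :
    Tendsto (fun n => ∫ p in Icc (0:ℝ) T ×ˢ (univ : Set ℝ), c n p.1 * F p) atTop
      (𝓝 (∫ p in Icc (0:ℝ) T ×ˢ (univ : Set ℝ), F p)) := by
  refine tendsto_integral_of_dominated_convergence (fun p => |F p|) (fun n => ?_) hF.abs
    (fun n => ae_of_all _ fun p => ?_) ?_
  · exact ((hcc n).comp continuous_fst).aestronglyMeasurable.mul hF.aestronglyMeasurable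
  · rw [Real.norm_eq_abs, abs_mul]
    exact mul_le_of_le_one_left (abs_nonneg _) (hc n _)
  · rw [Measure.restrict_congr_set (strip_ae_eq T)]
    filter_upwards [ae_restrict_mem (measurableSet_Ioo.prod MeasurableSet.univ)] with p hp
    simpa using (hlim p.1 hp.1).mul_const (F p)

/-- Cutting off a test function near `t = 0` and `t = T` produces the boundary terms of the weak
formulation in the limit. -/
theorem tendsto_pair_cutD {T : ℝ} (hT : 0 < T) (u : cU T) (φ : TTestC) :
    Tendsto (fun n => pair T u.toFun (fun p => cutD T n p.1 * φ.toFun p)) atTop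
      (𝓝 ((∫ x, u.toFun (0, x) * φ.toFun (0, x)) - ∫ x, u.toFun (T, x) * φ.toFun (T, x))) := by
  have h := tendsto_integral_cutD hT (u.continuousOn_slice φ)
  refine h.congr fun n => ?_
  have hu : L1loc T u.toFun := L1loc.of_bdd (C := 1) u.meas fun p => by
    rw [abs_of_nonneg (u.mem01 p).1]; exact (u.mem01 p).2
  have hi := hu.integrable_mul (k := fun p => cutD T n p.1 * φ.toFun p)
    (((continuous_cutD T n).comp continuous_fst).mul φ.smooth.continuous) φ.cpt.mul_left
  unfold pair
  rw [Measure.volume_eq_prod] at hi ⊢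
  rw [setIntegral_prod _ hi]
  refine setIntegral_congr_fun measurableSet_Icc fun t _ => ?_
  simp only [Measure.restrict_univ]
  rw [← integral_const_mul]
  congr 1
  ext x
  ring

/-! ### Uniqueness of the weak derivative -/

theorem weakDx_unique {T : ℝ} {u w w' : ℝ × ℝ → ℝ} (hw : L1loc T w) (hw' : L1loc T w')
    (h : HasWeakDx T u w) (h' : HasWeakDx T u w') :
    w =ᵐ[volume.restrict (Icc (0:ℝ) T ×ˢ (univ : Set ℝ))] w' := by
  have hopen : IsOpen (Ioo (0:ℝ) T ×ˢ (univ : Set ℝ)) := isOpen_Ioo.prod isOpen_univ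
  have hloc : ∀ {v : ℝ × ℝ → ℝ}, L1loc T v →
      LocallyIntegrableOn v (Ioo (0:ℝ) T ×ˢ (univ : Set ℝ)) volume := by
    intro v hv p hp
    refine ⟨Icc (0:ℝ) T ×ˢ Icc (-(|p.2| + 1)) (|p.2| + 1), mem_nhdsWithin_of_mem_nhds ?_,
      hv.2 _ (by positivity)⟩
    rw [nhds_prod_eq]
    refine prod_mem_prod (Icc_mem_nhds hp.1.1 hp.1.2) (Icc_mem_nhds ?_ ?_)
    · linarith [neg_abs_le p.2]
    · linarith [le_abs_self p.2]
  have key := hopen.ae_eq_zero_of_integral_contDiff_smul_eq_zero (μ := volume)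
    ((hloc hw).sub (hloc hw')) (fun g hg hgc hgs => by
      let φ : TTest T := ⟨g, hg, hgc, (subset_tsupport g).trans hgs⟩
      have e : pair T w g = pair T w' g := by
        have h1 := h φ
        have h2 := h' φ
        simp only [φ] at h1 h2
        linarith
      unfold pair at e
      have i1 := hw.integrable_mul hg.continuous hgc
      have i2 := hw'.integrable_mul hg.continuous hgc
      rw [← sub_eq_zero, ← integral_sub i1 i2] at e
      rw [← e, ← setIntegral_eq_integral_of_forall_compl_eq_zero
        (s := Icc (0:ℝ) T ×ˢ (univ : Set ℝ))]
      · congr 1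
        ext p
        simp only [smul_eq_mul, Pi.sub_apply]
        ring
      · intro p hp
        have : g p = 0 := image_eq_zero_of_notMem_tsupport fun hm =>
          hp ⟨Ioo_subset_Icc_self (hgs hm).1, trivial⟩
        simp [this])
  rw [Measure.restrict_congr_set (strip_ae_eq T)]
  filter_upwards [ae_restrict_of_ae key,
    ae_restrict_mem (measurableSet_Ioo.prod MeasurableSet.univ)] with p hp hm
  exact sub_eq_zero.1 (hp hm)

theorem ellC_congr {T ε : ℝ} {f D : ℝ → ℝ} {u w w' : ℝ × ℝ → ℝ}
    (h : w =ᵐ[volume.restrict (Icc (0:ℝ) T ×ˢ (univ : Set ℝ))] w') (φ : TTestC) :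
    ellC f D T ε u w φ = ellC f D T ε u w' φ := by
  unfold ellC
  congr 2
  refine integral_congr_ae ?_
  filter_upwards [h] with p hp
  rw [hp]

/-! ### Passing to test functions that do not vanish at the boundary -/

theorem IexprW_eq_ellC {T ε : ℝ} (f D σ : ℝ → ℝ) (u w : ℝ × ℝ → ℝ) (φ : TTest T) :
    IexprW f D σ T ε u w φ = ellC f D T ε u w φ.toC
      - 1 / 2 * pair T (fun p => σ (u p) * pxF φ.toC.toFun p) (pxF φ.toC.toFun) := by
  have h0 : ∀ t x, t ∉ Ioo (0:ℝ) T → φ.toFun (t, x) = 0 := fun t x ht => by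
    by_contra hne
    exact ht (φ.supp hne).1
  have hT : ∀ x, φ.toFun (T, x) = 0 := fun x => h0 T x (by simp)
  have hz : ∀ x, φ.toFun (0, x) = 0 := fun x => h0 0 x (by simp)
  simp [IexprW, ellC, TTest.toC, hT, hz]

theorem cU.l1 {T : ℝ} (u : cU T) : L1loc T u.toFun :=
  L1loc.of_bdd (C := 1) u.meas fun p => by
    rw [abs_of_nonneg (u.mem01 p).1]; exact (u.mem01 p).2

theorem cU.l1_comp {T : ℝ} (u : cU T) {F : ℝ → ℝ} (hF : ContinuousOn F (Icc 0 1)) :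
    L1loc T (fun p => F (u.toFun p)) := by
  obtain ⟨C, hC⟩ := bdd_comp_unit hF u.mem01
  exact L1loc.of_bdd (measurable_comp_unit hF u.meas u.mem01) hC

theorem cU.l1_comp_mul {T : ℝ} (u : cU T) {F : ℝ → ℝ} (hF : ContinuousOn F (Icc 0 1))
    {w : ℝ × ℝ → ℝ} (hw : L1loc T w) : L1loc T (fun p => F (u.toFun p) * w p) := by
  obtain ⟨C, hC⟩ := bdd_comp_unit hF u.mem01
  exact L1loc.bdd_mul (measurable_comp_unit hF u.meas u.mem01) hC hw

theorem L1loc.of_continuous {T : ℝ} {k : ℝ × ℝ → ℝ} (hk : Continuous k) : L1loc T k :=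
  ⟨hk.measurable, fun _ _ =>
    hk.continuousOn.integrableOn_compact (isCompact_Icc.prod isCompact_Icc)⟩

theorem tendsto_pair_cut {T : ℝ} (hT : 0 < T) {h k : ℝ × ℝ → ℝ} (hh : L1loc T h)
    (hk : Continuous k) (hc : HasCompactSupport k) :
    Tendsto (fun n => pair T h (fun p => cut T n p.1 * k p)) atTop (𝓝 (pair T h k)) := by
  have := tendsto_integral_strip (hh.integrable_mul hk hc) (c := cut T)
    (fun n => (cut_contDiff T n).continuous) (abs_cut_le T) (fun t ht => tendsto_cut hT ht)
  refine this.congr fun n => ?_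
  unfold pair
  congr 1
  ext p
  ring

theorem tendsto_IexprW_cutTest {T ε : ℝ} (hT : 0 < T) {f D σ : ℝ → ℝ}
    (hf : ContinuousOn f (Icc 0 1)) (hD : ContinuousOn D (Icc 0 1))
    (hσ : ContinuousOn σ (Icc 0 1)) (u : cU T) {w : ℝ × ℝ → ℝ} (hw : L1loc T w) (φ : TTestC) :
    Tendsto (fun n => IexprW f D σ T ε u.toFun w (cutTest hT n φ)) atTop
      (𝓝 (ellC f D T ε u.toFun w φ
        - 1 / 2 * pair T (fun p => σ (u.toFun p) * pxF φ.toFun p) (pxF φ.toFun))) := by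
  have epx : ∀ n, pxF (cutTest hT n φ).toFun = fun p => cut T n p.1 * pxF φ.toFun p :=
    fun n => funext (pxF_cutTest hT n φ)
  have l1 := tendsto_pair_cutD hT u φ
  have l2 := tendsto_pair_cut hT u.l1 φ.continuous_pt φ.cpt_pt
  have l3 := tendsto_pair_cut hT (u.l1_comp hf) φ.continuous_px φ.cpt_px
  have l4 := tendsto_pair_cut hT (u.l1_comp_mul hD hw) φ.continuous_px φ.cpt_px
  have l5 : Tendsto (fun n => pair T (fun p => σ (u.toFun p) * (cut T n p.1 * pxF φ.toFun p))
      (fun p => cut T n p.1 * pxF φ.toFun p)) atTop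
      (𝓝 (pair T (fun p => σ (u.toFun p) * pxF φ.toFun p) (pxF φ.toFun))) := by
    have := tendsto_integral_strip
      ((u.l1_comp_mul hσ (L1loc.of_continuous φ.continuous_px)).integrable_mul
        φ.continuous_px φ.cpt_px) (c := fun n t => cut T n t ^ 2)
      (fun n => (cut_contDiff T n).continuous.pow 2)
      (fun n t => by
        rw [abs_pow]; exact pow_le_one₀ (abs_nonneg _) (abs_cut_le T n t))
      (fun t ht => by simpa using (tendsto_cut hT ht).pow 2)
    refine this.congr fun n => ?_
    unfold pair
    congr 1
    ext p
    ring
  have ept : ∀ n, pair T u.toFun (ptF (cutTest hT n φ).toFun)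
      = pair T u.toFun (fun p => cut T n p.1 * ptF φ.toFun p)
        + pair T u.toFun (fun p => cutD T n p.1 * φ.toFun p) := fun n => by
    unfold pair
    rw [← integral_add]
    · congr 1
      ext p
      rw [ptF_cutTest]
      ring
    · exact u.l1.integrable_mul (k := fun p => cut T n p.1 * ptF φ.toFun p)
        (((cut_contDiff T n).continuous.comp continuous_fst).mul φ.continuous_pt)
        φ.cpt_pt.mul_left
    · exact u.l1.integrable_mul (k := fun p => cutD T n p.1 * φ.toFun p)
        (((continuous_cutD T n).comp continuous_fst).mul φ.smooth.continuous)
        φ.cpt.mul_left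
  have := (((l2.add l1).neg.sub l3).add (l4.const_mul (ε / 2))).sub (l5.const_mul (1 / 2))
  simp only [IexprW, epx, ept]
  convert this using 2
  unfold ellC
  ring

/-- The supremum defining `I_ε` may be taken over the test functions on `[0,T] × ℝ`. -/
theorem iSup_TTest_eq {T ε : ℝ} (hT : 0 < T) {f D σ : ℝ → ℝ}
    (hf : ContinuousOn f (Icc 0 1)) (hD : ContinuousOn D (Icc 0 1))
    (hσ : ContinuousOn σ (Icc 0 1)) (u : cU T) {w : ℝ × ℝ → ℝ} (hw : L1loc T w) :
    (⨆ φ : TTest T, ENNReal.ofReal (IexprW f D σ T ε u.toFun w φ)) =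
      ⨆ φ : TTestC, ENNReal.ofReal (ellC f D T ε u.toFun w φ
        - 1 / 2 * pair T (fun p => σ (u.toFun p) * pxF φ.toFun p) (pxF φ.toFun)) := by
  apply le_antisymm
  · refine iSup_le fun φ => ?_
    rw [IexprW_eq_ellC]
    exact le_iSup (fun φ : TTestC => ENNReal.ofReal (ellC f D T ε u.toFun w φ
        - 1 / 2 * pair T (fun p => σ (u.toFun p) * pxF φ.toFun p) (pxF φ.toFun))) φ.toC
  · refine iSup_le fun φ => ?_
    have h := (ENNReal.continuous_ofReal.tendsto _).comp
      (tendsto_IexprW_cutTest (ε := ε) hT hf hD hσ u hw φ)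
    exact le_of_tendsto' h fun n =>
      le_iSup (fun φ : TTest T => ENNReal.ofReal (IexprW f D σ T ε u.toFun w φ)) (cutTest hT n φ)

theorem Ieps_eq_iSup {T ε : ℝ} (hT : 0 < T) {f D σ : ℝ → ℝ}
    (hf : ContinuousOn f (Icc 0 1)) (hD : ContinuousOn D (Icc 0 1))
    (hσ : ContinuousOn σ (Icc 0 1)) (u : cU T) {w : ℝ × ℝ → ℝ} (hw : L2loc T w)
    (hdx : HasWeakDx T u.toFun w) :
    Ieps f D σ T ε u =
      ⨆ φ : TTestC, ENNReal.ofReal (ellC f D T ε u.toFun w φ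
        - 1 / 2 * pair T (fun p => σ (u.toFun p) * pxF φ.toFun p) (pxF φ.toFun)) := by
  have h : hasDx T u.toFun := ⟨w, hw, hdx⟩
  have hc : wDx T u.toFun = h.choose := by simp [wDx, h]
  rw [Ieps, if_pos h, hc, iSup_TTest_eq hT hf hD hσ u h.choose_spec.1.l1]
  have hae := weakDx_unique h.choose_spec.1.l1 hw.l1 h.choose_spec.2 hdx
  simp_rw [ellC_congr hae]

/-! ### The weighted space `L²(a dt dx)` -/

section Weighted

open scoped InnerProductSpace

/-- The measure `a dt dx` on `[0,T] × ℝ`. -/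
def wmeas (T : ℝ) (a : ℝ × ℝ → ℝ) : Measure (ℝ × ℝ) :=
  (volume.restrict (Icc (0:ℝ) T ×ˢ (univ : Set ℝ))).withDensity fun p => ENNReal.ofReal (a p)

variable {T : ℝ} {a : ℝ × ℝ → ℝ}

theorem integral_wmeas (ha : Measurable a) (ha0 : ∀ p, 0 ≤ a p) (g : ℝ × ℝ → ℝ) :
    ∫ p, g p ∂wmeas T a = ∫ p in Icc (0:ℝ) T ×ˢ (univ : Set ℝ), a p * g p := by
  rw [wmeas, integral_withDensity_eq_integral_toReal_smul ha.ennreal_ofReal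
    (ae_of_all _ fun _ => ENNReal.ofReal_lt_top)]
  simp [ENNReal.toReal_ofReal, ha0]

theorem integrable_wmeas_iff (ha : Measurable a) (ha0 : ∀ p, 0 ≤ a p) {g : ℝ × ℝ → ℝ} :
    Integrable g (wmeas T a) ↔
      IntegrableOn (fun p => a p * g p) (Icc (0:ℝ) T ×ˢ (univ : Set ℝ)) := by
  rw [wmeas, integrable_withDensity_iff_integrable_smul' ha.ennreal_ofReal
    (ae_of_all _ fun _ => ENNReal.ofReal_lt_top)]
  simp [ENNReal.toReal_ofReal, ha0, IntegrableOn]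

theorem memLp_wmeas_iff (ha : Measurable a) (ha0 : ∀ p, 0 ≤ a p) {P : ℝ × ℝ → ℝ}
    (hP : Measurable P) :
    MemLp P 2 (wmeas T a) ↔
      IntegrableOn (fun p => a p * P p ^ 2) (Icc (0:ℝ) T ×ˢ (univ : Set ℝ)) := by
  rw [memLp_two_iff_integrable_sq hP.aestronglyMeasurable, integrable_wmeas_iff ha ha0]

theorem inner_toLp_wmeas (ha : Measurable a) (ha0 : ∀ p, 0 ≤ a p) {P Q : ℝ × ℝ → ℝ}
    (hP : MemLp P 2 (wmeas T a)) (hQ : MemLp Q 2 (wmeas T a)) :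
    ⟪hP.toLp P, hQ.toLp Q⟫_ℝ = pair T (fun p => a p * P p) Q := by
  have h : ⟪hP.toLp P, hQ.toLp Q⟫_ℝ = ∫ p, P p * Q p ∂wmeas T a := by
    rw [L2.inner_def]
    refine integral_congr_ae ?_
    filter_upwards [hP.coeFn_toLp, hQ.coeFn_toLp] with p h1 h2
    rw [h1, h2]
    simp [mul_comm]
  rw [h, integral_wmeas ha ha0, pair]
  simp only [mul_assoc]

theorem norm_toLp_wmeas (ha : Measurable a) (ha0 : ∀ p, 0 ≤ a p) {P : ℝ × ℝ → ℝ}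
    (hP : MemLp P 2 (wmeas T a)) : ‖hP.toLp P‖ ^ 2 = pair T (fun p => a p * P p) P := by
  rw [← real_inner_self_eq_norm_sq, inner_toLp_wmeas ha ha0]

theorem norm_toLp_sub_wmeas (ha : Measurable a) (ha0 : ∀ p, 0 ≤ a p) {P Q : ℝ × ℝ → ℝ}
    (hP : MemLp P 2 (wmeas T a)) (hQ : MemLp Q 2 (wmeas T a)) :
    ‖hP.toLp P - hQ.toLp Q‖ ^ 2
      = ∫ p in Icc (0:ℝ) T ×ˢ (univ : Set ℝ), a p * (P p - Q p) ^ 2 := by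
  rw [← MemLp.toLp_sub, norm_toLp_wmeas ha ha0, pair]
  congr 1
  ext p
  simp only [Pi.sub_apply]
  ring

theorem integrable_pair_wmeas (ha : Measurable a) (ha0 : ∀ p, 0 ≤ a p) {P Q : ℝ × ℝ → ℝ}
    (hP : MemLp P 2 (wmeas T a)) (hQ : MemLp Q 2 (wmeas T a)) :
    IntegrableOn (fun p => a p * P p * Q p) (Icc (0:ℝ) T ×ˢ (univ : Set ℝ)) := by
  have := (integrable_wmeas_iff ha ha0).1 (hP.integrable_mul hQ)
  simpa only [Pi.mul_apply, mul_assoc] using this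

/-! ### The linear space of test functions -/

/-- The vector space of smooth compactly supported functions, underlying `TTestC`. -/
def testV : Submodule ℝ (ℝ × ℝ → ℝ) where
  carrier := {ψ | ContDiff ℝ (⊤ : ℕ∞) ψ ∧ HasCompactSupport ψ}
  add_mem' h h' := ⟨h.1.add h'.1, h.2.add h'.2⟩
  zero_mem' := ⟨contDiff_const, HasCompactSupport.zero⟩
  smul_mem' c _ h := ⟨contDiff_const.smul h.1, h.2.smul_left (f := fun _ => c)⟩

/-- An element of `testV` as a bundled test function. -/
def toC (v : testV) : TTestC := ⟨v.1, v.2.1, v.2.2⟩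

theorem toC_surjective : Function.Surjective toC := fun φ =>
  ⟨⟨φ.toFun, φ.smooth, φ.cpt⟩, rfl⟩

theorem testV.differentiableAt (v : testV) (p : ℝ × ℝ) : DifferentiableAt ℝ v.1 p :=
  (v.2.1.differentiable (by simp)).differentiableAt

theorem testV.pxF_add (v w : testV) : pxF (toC (v + w)).toFun
    = fun p => pxF (toC v).toFun p + pxF (toC w).toFun p := by
  funext p
  change fderiv ℝ (v.1 + w.1) p _ = fderiv ℝ v.1 p _ + fderiv ℝ w.1 p _
  rw [fderiv_add (testV.differentiableAt v p) (testV.differentiableAt w p)]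
  rfl

theorem testV.ptF_add (v w : testV) : ptF (toC (v + w)).toFun
    = fun p => ptF (toC v).toFun p + ptF (toC w).toFun p := by
  funext p
  change fderiv ℝ (v.1 + w.1) p _ = fderiv ℝ v.1 p _ + fderiv ℝ w.1 p _
  rw [fderiv_add (testV.differentiableAt v p) (testV.differentiableAt w p)]
  rfl

theorem testV.pxF_smul (c : ℝ) (v : testV) : pxF (toC (c • v)).toFun
    = fun p => c * pxF (toC v).toFun p := by
  funext p
  change fderiv ℝ (c • v.1) p _ = c * fderiv ℝ v.1 p _
  rw [fderiv_const_smul (testV.differentiableAt v p)]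
  rfl

theorem testV.ptF_smul (c : ℝ) (v : testV) : ptF (toC (c • v)).toFun
    = fun p => c * ptF (toC v).toFun p := by
  funext p
  change fderiv ℝ (c • v.1) p _ = c * fderiv ℝ v.1 p _
  rw [fderiv_const_smul (testV.differentiableAt v p)]
  rfl

theorem pair_add {h k k' : ℝ × ℝ → ℝ}
    (i : IntegrableOn (fun p => h p * k p) (Icc (0:ℝ) T ×ˢ (univ : Set ℝ)))
    (i' : IntegrableOn (fun p => h p * k' p) (Icc (0:ℝ) T ×ˢ (univ : Set ℝ))) :
    pair T h (fun p => k p + k' p) = pair T h k + pair T h k' := by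
  simp only [pair, mul_add]
  exact integral_add i i'

theorem pair_const_mul (c : ℝ) (h k : ℝ × ℝ → ℝ) :
    pair T h (fun p => c * k p) = c * pair T h k := by
  simp only [pair]
  rw [← integral_const_mul]
  congr 1
  ext p
  ring

theorem memLp_pxF (ha : Measurable a) (ha0 : ∀ p, 0 ≤ a p) {C : ℝ} (haC : ∀ p, |a p| ≤ C)
    (φ : TTestC) : MemLp (pxF φ.toFun) 2 (wmeas T a) := by
  rw [memLp_wmeas_iff ha ha0 φ.continuous_px.measurable]
  have := (L1loc.of_bdd (T := T) ha haC).integrable_mul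
    (φ.continuous_px.mul φ.continuous_px) φ.cpt_px.mul_left
  refine this.congr_fun (fun p _ => ?_) (measurableSet_Icc.prod MeasurableSet.univ)
  simp only [Pi.mul_apply, pow_two]

/-- The linear map `φ ↦ φ_x` from test functions to `L²(a dt dx)`. -/
def gradMap (ha : Measurable a) (ha0 : ∀ p, 0 ≤ a p) {C : ℝ} (haC : ∀ p, |a p| ≤ C) :
    testV →ₗ[ℝ] Lp ℝ 2 (wmeas T a) where
  toFun v := (memLp_pxF ha ha0 haC (toC v)).toLp _
  map_add' v w := by
    rw [← MemLp.toLp_add, MemLp.toLp_eq_toLp_iff, testV.pxF_add]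
    rfl
  map_smul' c v := by
    rw [RingHom.id_apply, ← MemLp.toLp_const_smul, MemLp.toLp_eq_toLp_iff, testV.pxF_smul]
    rfl

/-- The class `𝓓¹_a` is the closure of the gradients of test functions in `L²(a dt dx)`. -/
theorem inD1_iff (ha : Measurable a) (ha0 : ∀ p, 0 ≤ a p) {C : ℝ} (haC : ∀ p, |a p| ≤ C)
    {P : ℝ × ℝ → ℝ} (hPm : Measurable P) (hP : MemLp P 2 (wmeas T a)) :
    InD1 T a P ↔ hP.toLp P ∈ closure (range (gradMap (T := T) ha ha0 haC)) := by
  rw [Metric.mem_closure_iff]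
  constructor
  · rintro ⟨-, -, h⟩ δ hδ
    obtain ⟨φ, hφ⟩ := h (δ ^ 2) (by positivity)
    obtain ⟨v, rfl⟩ := toC_surjective φ
    refine ⟨_, ⟨v, rfl⟩, ?_⟩
    rw [dist_eq_norm]
    refine lt_of_pow_lt_pow_left₀ 2 hδ.le ?_
    exact (norm_toLp_sub_wmeas ha ha0 hP (memLp_pxF ha ha0 haC (toC v))).trans_lt hφ
  · intro h
    refine ⟨hPm, (memLp_wmeas_iff ha ha0 hPm).1 hP, fun δ hδ => ?_⟩
    obtain ⟨-, ⟨v, rfl⟩, hv⟩ := h (√δ) (Real.sqrt_pos.2 hδ)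
    refine ⟨(toC v), ?_⟩
    rw [← norm_toLp_sub_wmeas ha ha0 hP (memLp_pxF ha ha0 haC (toC v))]
    rw [dist_eq_norm] at hv
    calc _ < √δ ^ 2 := pow_lt_pow_left₀ hv (norm_nonneg _) two_ne_zero
      _ = δ := Real.sq_sqrt hδ.le

end Weighted

/-! ### The functional `ℓ^u_ε` -/

/-- The functional `ℓ^u_ε` as a linear form on test functions. -/
def ellMap {T : ℝ} (ε : ℝ) {f D : ℝ → ℝ} (hf : ContinuousOn f (Icc 0 1))
    (hD : ContinuousOn D (Icc 0 1)) (u : cU T) {w : ℝ × ℝ → ℝ} (hw : L1loc T w) :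
    testV →ₗ[ℝ] ℝ where
  toFun v := ellC f D T ε u.toFun w (toC v)
  map_add' v v' := by
    have e : ∀ t, ∫ x, u.toFun (t, x) * (toC (v + v')).toFun (t, x)
        = (∫ x, u.toFun (t, x) * (toC v).toFun (t, x))
          + ∫ x, u.toFun (t, x) * (toC v').toFun (t, x) := fun t => by
      rw [← integral_add (u.integrable_slice (toC v) t t) (u.integrable_slice (toC v') t t)]
      congr 1
      ext x
      exact mul_add _ _ _
    simp only [ellC, e, testV.pxF_add, testV.ptF_add]
    rw [pair_add (u.l1.integrable_mul (toC v).continuous_pt (toC v).cpt_pt)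
        (u.l1.integrable_mul (toC v').continuous_pt (toC v').cpt_pt),
      pair_add ((u.l1_comp hf).integrable_mul (toC v).continuous_px (toC v).cpt_px)
        ((u.l1_comp hf).integrable_mul (toC v').continuous_px (toC v').cpt_px),
      pair_add ((u.l1_comp_mul hD hw).integrable_mul (toC v).continuous_px (toC v).cpt_px)
        ((u.l1_comp_mul hD hw).integrable_mul (toC v').continuous_px (toC v').cpt_px)]
    ring
  map_smul' c v := by
    have e : ∀ t, ∫ x, u.toFun (t, x) * (toC (c • v)).toFun (t, x)
        = c * ∫ x, u.toFun (t, x) * (toC v).toFun (t, x) := fun t => by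
      rw [← integral_const_mul]
      congr 1
      ext x
      exact mul_left_comm _ _ _
    simp only [ellC, e, testV.pxF_smul, testV.ptF_smul, pair_const_mul, RingHom.id_apply,
      smul_eq_mul]
    ring

/-- The controlled equation says that `σ(u) P` represents `ℓ^u_ε`. -/
theorem rieszEq_iff {T ε : ℝ} {f D σ : ℝ → ℝ} (hf : ContinuousOn f (Icc 0 1))
    (hD : ContinuousOn D (Icc 0 1)) (u : cU T) {w P : ℝ × ℝ → ℝ} (hw : L1loc T w)
    (hi : ∀ φ : TTestC, IntegrableOn (fun p => σ (u.toFun p) * P p * pxF φ.toFun p)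
      (Icc (0:ℝ) T ×ˢ (univ : Set ℝ))) :
    rieszEq f D σ T ε u.toFun w P ↔ ∀ φ : TTestC,
      ellC f D T ε u.toFun w φ = pair T (fun p => σ (u.toFun p) * P p) (pxF φ.toFun) := by
  refine forall_congr' fun φ => ?_
  have e : pair T (fun p => f (u.toFun p) - ε / 2 * (D (u.toFun p) * w p) + σ (u.toFun p) * P p)
      (pxF φ.toFun) = pair T (fun p => f (u.toFun p)) (pxF φ.toFun)
        - ε / 2 * pair T (fun p => D (u.toFun p) * w p) (pxF φ.toFun)
        + pair T (fun p => σ (u.toFun p) * P p) (pxF φ.toFun) := by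
    have i1 := (u.l1_comp hf).integrable_mul φ.continuous_px φ.cpt_px
    have i2 := ((u.l1_comp_mul hD hw).integrable_mul φ.continuous_px φ.cpt_px).const_mul (ε / 2)
    simp only [pair]
    rw [← integral_const_mul, ← integral_sub i1 i2]
    refine Eq.trans ?_ (integral_add (i1.sub i2) (hi φ))
    congr 1
    ext p
    ring
  rw [e, ellC]
  constructor <;> intro h <;> linarith

/-! ### The Riesz representation -/

theorem nonneg_of_pos_Ioo {σ : ℝ → ℝ} (hσ : ContinuousOn σ (Icc 0 1))
    (hσpos : ∀ v ∈ Ioo (0:ℝ) 1, 0 < σ v) : ∀ v ∈ Icc (0:ℝ) 1, 0 ≤ σ v := by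
  have hc : closure (Ioo (0:ℝ) 1) = Icc 0 1 := closure_Ioo zero_ne_one
  intro v hv
  have := le_on_closure (f := fun _ => (0:ℝ)) (g := σ) (s := Ioo (0:ℝ) 1)
    (fun x hx => (hσpos x hx).le) continuousOn_const (by rwa [hc])
  exact this (by rwa [hc])

/-- Riesz representation of the cost: `I_ε(u) < +∞` iff there is
`Ψ ∈ 𝓓¹_{σ(u)}` (represented by its gradient `P = Ψ_x`) such that `u` solves the controlled
equation; in that case `Ψ` is unique and
`I_ε(u) = (1/2)‖u_t + f(u)_x - (ε/2)(D(u)u_x)_x‖²_{𝓓⁻¹_{σ(u)}} = (1/2)‖Ψ‖²_{𝓓¹_{σ(u)}}`. -/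
theorem Ieps_riesz (T : ℝ) (hT : 0 < T) (f D σ : ℝ → ℝ)
    (hf : ∃ C : NNReal, LipschitzOnWith C f (Icc 0 1))
    (hD : ContinuousOn D (Icc 0 1)) (hσ : ContinuousOn σ (Icc 0 1))
    (hDpos : ∃ c > 0, ∀ v ∈ Icc (0:ℝ) 1, c ≤ D v)
    (hσpos : ∀ v ∈ Ioo (0:ℝ) 1, 0 < σ v)
    (ε : ℝ) (hε : 0 < ε) (u : cU T) :
    (Ieps f D σ T ε u ≠ ⊤ ↔
      ∃ w P : ℝ × ℝ → ℝ, L2loc T w ∧ HasWeakDx T u.toFun w ∧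
        InD1 T (fun p => σ (u.toFun p)) P ∧ rieszEq f D σ T ε u.toFun w P) ∧
    (∀ w P P' : ℝ × ℝ → ℝ, L2loc T w → HasWeakDx T u.toFun w →
      InD1 T (fun p => σ (u.toFun p)) P → rieszEq f D σ T ε u.toFun w P →
      InD1 T (fun p => σ (u.toFun p)) P' → rieszEq f D σ T ε u.toFun w P' →
      (∫ p in Icc (0:ℝ) T ×ˢ (univ : Set ℝ), σ (u.toFun p) * (P p - P' p) ^ 2) = 0) ∧
    ∀ w P : ℝ × ℝ → ℝ, L2loc T w → HasWeakDx T u.toFun w →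
      InD1 T (fun p => σ (u.toFun p)) P → rieszEq f D σ T ε u.toFun w P →
      Ieps f D σ T ε u =
        (⨆ φ : TTestC, ENNReal.ofReal (ellC f D T ε u.toFun w φ -
          1 / 2 * pair T (fun p => σ (u.toFun p) * pxF φ.toFun p) (pxF φ.toFun))) ∧
      Ieps f D σ T ε u =
        ENNReal.ofReal (1 / 2 * pair T (fun p => σ (u.toFun p) * P p) P) := by
  obtain ⟨Kf, hKf⟩ := hf
  have hfc := hKf.continuousOn
  have ha : Measurable fun p => σ (u.toFun p) := measurable_comp_unit hσ u.meas u.mem01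
  have ha0 : ∀ p, 0 ≤ σ (u.toFun p) := fun p => nonneg_of_pos_Ioo hσ hσpos _ (u.mem01 p)
  obtain ⟨C, haC⟩ := bdd_comp_unit hσ u.mem01
  let A := gradMap (T := T) ha ha0 haC
  have memP : ∀ {P}, InD1 T (fun p => σ (u.toFun p)) P →
      MemLp P 2 (wmeas T fun p => σ (u.toFun p)) := fun h => (memLp_wmeas_iff ha ha0 h.1).2 h.2.1
  have hA : ∀ v, ‖A v‖ ^ 2 =
      pair T (fun p => σ (u.toFun p) * pxF (toC v).toFun p) (pxF (toC v).toFun) := fun v =>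
    norm_toLp_wmeas ha ha0 (memLp_pxF ha ha0 haC (toC v))
  have hPA : ∀ {P} (hP : MemLp P 2 (wmeas T fun p => σ (u.toFun p))) (v : testV),
      inner ℝ (hP.toLp P) (A v) = pair T (fun p => σ (u.toFun p) * P p) (pxF (toC v).toFun) :=
    fun hP v => inner_toLp_wmeas ha ha0 hP (memLp_pxF ha ha0 haC (toC v))
  have hrz : ∀ {w P}, L2loc T w → MemLp P 2 (wmeas T fun p => σ (u.toFun p)) →
      (rieszEq f D σ T ε u.toFun w P ↔ ∀ φ : TTestC,
        ellC f D T ε u.toFun w φ = pair T (fun p => σ (u.toFun p) * P p) (pxF φ.toFun)) :=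
    fun hw hP => rieszEq_iff hfc hD u hw.l1 fun φ =>
      integrable_pair_wmeas ha ha0 hP (memLp_pxF ha ha0 haC φ)
  have value : ∀ w P : ℝ × ℝ → ℝ, L2loc T w → HasWeakDx T u.toFun w →
      InD1 T (fun p => σ (u.toFun p)) P → rieszEq f D σ T ε u.toFun w P →
      Ieps f D σ T ε u =
        (⨆ φ : TTestC, ENNReal.ofReal (ellC f D T ε u.toFun w φ -
          1 / 2 * pair T (fun p => σ (u.toFun p) * pxF φ.toFun p) (pxF φ.toFun))) ∧
      Ieps f D σ T ε u =
        ENNReal.ofReal (1 / 2 * pair T (fun p => σ (u.toFun p) * P p) P) := by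
    intro w P hw hdx hP heq
    have hsup := Ieps_eq_iSup (ε := ε) hT hfc hD hσ u hw hdx
    refine ⟨hsup, ?_⟩
    have hL := memP hP
    rw [hsup, ← norm_toLp_wmeas ha ha0 hL,
      ← iSup_riesz A (hL.toLp P) ((inD1_iff ha ha0 haC hP.1 hL).1 hP),
      ← toC_surjective.iSup_comp]
    refine iSup_congr fun v => ?_
    rw [hA, hPA hL, (hrz hw hL).1 heq]
  refine ⟨⟨fun hfin => ?_, ?_⟩, ?_, value⟩
  · have hdx : hasDx T u.toFun := by
      by_contra h
      exact hfin (if_neg h)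
    obtain ⟨w, hw, hdx⟩ := hdx
    let l := ellMap ε hfc hD u hw.l1
    have hsup := Ieps_eq_iSup (ε := ε) hT hfc hD hσ u hw hdx
    let M := (Ieps f D σ T ε u).toReal
    have hle : ∀ v, l v - 1 / 2 * ‖A v‖ ^ 2 ≤ M := fun v => by
      rw [hA]
      refine (ENNReal.ofReal_le_iff_le_toReal hfin).1 ?_
      rw [hsup]
      exact le_iSup (fun φ : TTestC => ENNReal.ofReal (ellC f D T ε u.toFun w φ -
          1 / 2 * pair T (fun p => σ (u.toFun p) * pxF φ.toFun p) (pxF φ.toFun))) (toC v)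
    have hbound : ∀ v, |l v| ≤ √(2 * M) * ‖A v‖ := fun v => by
      -- Testing with all multiples `s • v` turns the finite supremum into a quadratic bound.
      have h := sq_bound_of_scaling (a := l v) (M := M) (sq_nonneg ‖A v‖) fun s => by
        have := hle (s • v)
        rwa [map_smul, map_smul, norm_smul, mul_pow, Real.norm_eq_abs, sq_abs,
          smul_eq_mul] at this
      rw [← Real.sqrt_sq_eq_abs, ← Real.sqrt_sq (norm_nonneg (A v)),
        ← Real.sqrt_mul (by positivity)]
      exact Real.sqrt_le_sqrt h
    obtain ⟨Q, hQ, hrep⟩ := exists_riesz A l _ hbound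
    have hQm : Measurable Q := (Lp.stronglyMeasurable Q).measurable
    have hQL : MemLp Q 2 (wmeas T fun p => σ (u.toFun p)) := Lp.memLp Q
    have hQe : hQL.toLp Q = Q := Lp.toLp_coeFn Q hQL
    refine ⟨w, Q, hw, hdx, (inD1_iff ha ha0 haC hQm hQL).2 (hQe.symm ▸ hQ),
      (hrz hw hQL).2 fun φ => ?_⟩
    obtain ⟨v, rfl⟩ := toC_surjective φ
    rw [← hPA hQL, hQe]
    exact hrep v
  · rintro ⟨w, P, hw, hdx, hP, heq⟩
    rw [(value w P hw hdx hP heq).2]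
    exact ENNReal.ofReal_ne_top
  · intro w P P' hw hdx hP heq hP' heq'
    have hL := memP hP
    have hL' := memP hP'
    rw [← norm_toLp_sub_wmeas ha ha0 hL hL', unique_riesz A _ _
      ((inD1_iff ha ha0 haC hP.1 hL).1 hP) ((inD1_iff ha ha0 haC hP'.1 hL').1 hP') fun v => ?_]
    · simp
    · rw [hPA, hPA, ← (hrz hw hL).1 heq, ← (hrz hw hL').1 heq']

end GammaSCL
end
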